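/- arXiv:2202.10703 — 4 statements merged into one kernel-verified Lean document; each statement's English description precedes it below -/
import Mathlib

section
/- There exist constants 𝔠 > 0 and δ₀ > 0 such that for every δ ∈ (0, δ₀) there is a constant C_δ > 0 with the following property. Let ℓ ⊂ ℝ³ be a line segment, let η, ξ satisfy 0 < ξ ≤ η² ≤ 1, let K > 0, and let Q ∈ H¹(ℓ, Sym₀) satisfy η·𝓔_{η,ξ}(Q, ℓ) ≤ K, where 𝓔_{η,ξ}(Q,ℓ) = ∫_ℓ (1/2)|Q'|² + (1/ξ²)f(Q) + (1/η²)g(Q) + C₀ (one-dimensional integral along ℓ, Q' the derivative along ℓ). Then there exists a measurable set I_δ ⊆ ℓ with H¹(ℓ ∖ I_δ) ≤ (K+1)·η / C_δ such that for every x ∈ I_δ the matrix Q(x) has a simple largest eigenvalue and its unit eigenvector n satisfies |n·e₃| ≥ 1 − 𝔠·√δ. -/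
/- STATEMENT 15: There exist 𝔠 > 0 and δ₀ > 0 such that for every δ ∈ (0,δ₀) there is
C_δ > 0 with: for every line segment ℓ (parametrized by arclength on [0,L]), every
0 < ξ ≤ η² ≤ 1, K > 0 and Q ∈ H¹(ℓ,Sym₀) with η·𝓔_{η,ξ}(Q,ℓ) ≤ K, there is a
measurable set I_δ ⊆ ℓ with H¹(ℓ∖I_δ) ≤ (K+1)η/C_δ such that for every x ∈ I_δ the
matrix Q(x) has a simple largest eigenvalue whose unit eigenvector n satisfies
|n·e₃| ≥ 1 − 𝔠√δ. The H¹ map Q is represented via its continuous representative and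
weak derivative G through the fundamental theorem of calculus. -/

noncomputable section

open Matrix MeasureTheory Metric Set Filter
open scoped ENNReal

abbrev Mat3 : Type := Matrix (Fin 3) (Fin 3) ℝ
abbrev E9 : Type := EuclideanSpace ℝ (Fin 3 × Fin 3)

def toM (A : E9) : Mat3 := Matrix.of fun i j => A (i, j)

def Sym0E : Set E9 := {A | (toM A).IsSymm ∧ (toM A).trace = 0}

def unitVec (n : Fin 3 → ℝ) : Prop := ∑ i, (n i) ^ 2 = 1

def sStar (a b c : ℝ) : ℝ := (b + Real.sqrt (b ^ 2 + 24 * a * c)) / (4 * c)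

def fLdG (a b c C : ℝ) (Q : Mat3) : ℝ :=
  C - a / 2 * (Q * Q).trace - b / 3 * (Q * Q * Q).trace + c / 4 * ((Q * Q).trace) ^ 2

def gMagE (sS : ℝ) (A : E9) : ℝ := 2 / 3 * sS - A (2, 2)

def IsEigen (Q : Mat3) (μ : ℝ) (v : Fin 3 → ℝ) : Prop := Q.mulVec v = μ • v

def MaxEigen (Q : Mat3) (lam : ℝ) (n : Fin 3 → ℝ) : Prop :=
  unitVec n ∧ IsEigen Q lam n ∧
    ∀ (μ : ℝ) (v : Fin 3 → ℝ), v ≠ 0 → IsEigen Q μ v → μ ≤ lam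

def SimpleMaxEigen (Q : Mat3) (lam : ℝ) (n : Fin 3 → ℝ) : Prop :=
  MaxEigen Q lam n ∧ ∀ v : Fin 3 → ℝ, IsEigen Q lam v → ∃ t : ℝ, v = t • n

/-- C₀(ξ,η) = −min over Sym₀ of (1/ξ²)f + (1/η²)g. -/
def C0const (a b c C ξ η : ℝ) : ℝ :=
  -sInf {v | ∃ P ∈ Sym0E,
    v = 1 / ξ ^ 2 * fLdG a b c C (toM P) + 1 / η ^ 2 * gMagE (sStar a b c) P}

/-- The one-dimensional energy 𝓔_{η,ξ}(Q,ℓ) of Q along the (arclength-parametrized)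
segment, with weak derivative G. -/
def energySeg (a b c C ξ η L : ℝ) (Q G : ℝ → E9) : ℝ≥0∞ :=
  ∫⁻ t in Ioo (0 : ℝ) L,
    ENNReal.ofReal (1 / 2 * ‖G t‖ ^ 2 + 1 / ξ ^ 2 * fLdG a b c C (toM (Q t)) +
      1 / η ^ 2 * gMagE (sStar a b c) (Q t) + C0const a b c C ξ η)

/-!
Compare a Q-tensor `A` with the uniaxial tensor `U` of the same norm `√(2/3) s` and director `e₃`.
Among traceless symmetric matrices of given norm, `tr Q³` is largest at the uniaxial ones, so
`f U ≤ f A`. Since `C₀` makes the potential part `W` of the energy density nonnegative at `U`, this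
gives `η⁻² (2/3 s - A₃₃) ≤ W A`, and the left-hand side controls `|A - U|² = 2 s (2/3 s - A₃₃)`.
Testing with the minimizer `s*` gives `C₀ ≥ 0`, hence `η⁻² g A ≤ W A`, which keeps `s` away
from `0`. So wherever `W ≤ δ s* / (4 η²)`, the tensor is within `√δ s` of `U` and a Rayleigh
quotient perturbation argument locates its top eigenvector. By Markov's inequality the other points
have measure `O(η)`.
-/

section Spectral

variable {ι : Type*} [Fintype ι]

section Eigenvalues

variable {A : Matrix ι ι ℝ}

theorem trace_pow_eq_sum_eigenvalues_pow [DecidableEq ι] (hA : A.IsHermitian) (m : ℕ) :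
    (A ^ m).trace = ∑ i, hA.eigenvalues i ^ m := by
  conv_lhs => rw [hA.spectral_theorem, ← map_pow, diagonal_pow, Unitary.conjStarAlgAut_apply,
    trace_mul_cycle, Unitary.coe_star_mul_self, Matrix.one_mul, trace_diagonal]
  simp

theorem posSemidef_smul_one_sub_of_eigenvalues_le [DecidableEq ι] (hA : A.IsHermitian)
    {lam : ℝ} (hlam : ∀ i, hA.eigenvalues i ≤ lam) : (lam • (1 : Matrix ι ι ℝ) - A).PosSemidef := by
  have diagonalized : lam • (1 : Matrix ι ι ℝ) - A = Unitary.conjStarAlgAut ℝ _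
      hA.eigenvectorUnitary (diagonal fun i => lam - hA.eigenvalues i) := by
    conv_lhs => rw [hA.spectral_theorem, ← map_one (Unitary.conjStarAlgAut ℝ _
      hA.eigenvectorUnitary), ← map_smul, ← map_sub]
    congr 1
    rw [smul_one_eq_diagonal, diagonal_sub]
    rfl
  rw [diagonalized, Unitary.conjStarAlgAut_apply]
  exact (PosSemidef.diagonal fun i => sub_nonneg.2 (hlam i)).mul_mul_conjTranspose_same _

theorem exists_eigenvector_forall_dotProduct_mulVec_le [Nonempty ι] (hA : A.IsSymm) :
    ∃ (lam : ℝ) (n : ι → ℝ), n ⬝ᵥ n = 1 ∧ A *ᵥ n = lam • n ∧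
      ∀ x : ι → ℝ, x ⬝ᵥ A *ᵥ x ≤ lam * (x ⬝ᵥ x) := by
  classical
  have hH : A.IsHermitian := by rwa [IsHermitian, conjTranspose_eq_transpose_of_trivial]
  obtain ⟨i, hi⟩ := Finite.exists_max hH.eigenvalues
  refine ⟨hH.eigenvalues i, hH.eigenvectorBasis i, ?_, hH.mulVec_eigenvectorBasis i, fun x => ?_⟩
  · have inner_self : inner ℝ (hH.eigenvectorBasis i) (hH.eigenvectorBasis i) = (1 : ℝ) := by simp
    rwa [EuclideanSpace.inner_eq_star_dotProduct, star_trivial] at inner_self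
  · have := (posSemidef_smul_one_sub_of_eigenvalues_le hH hi).dotProduct_mulVec_nonneg x
    simpa [sub_mulVec, dotProduct_sub, smul_mulVec] using this

theorem sub_mul_dotProduct_self_le_of_mulVec_eq_smul {k : ι} {s t ε lam : ℝ}
    (hA : ∀ x, |x ⬝ᵥ A *ᵥ x - (s * x k ^ 2 + t * (x ⬝ᵥ x))| ≤ ε * (x ⬝ᵥ x))
    (hlam : ∀ x, x ⬝ᵥ A *ᵥ x ≤ lam * (x ⬝ᵥ x)) {v : ι → ℝ} (hv : A *ᵥ v = lam • v) :
    (s - 2 * ε) * (v ⬝ᵥ v) ≤ s * v k ^ 2 := by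
  classical
  have lam_ge : s + t - ε ≤ lam := by
    have lower := (abs_le.1 (hA (Pi.single k 1))).1
    have upper := hlam (Pi.single k 1)
    simp only [single_one_dotProduct, Pi.single_eq_same] at lower upper
    linarith
  have upper := (abs_le.1 (hA v)).2
  rw [hv, dotProduct_smul, smul_eq_mul] at upper
  have v_nonneg : 0 ≤ v ⬝ᵥ v := dotProduct_self_star_nonneg v
  have := mul_le_mul_of_nonneg_right lam_ge v_nonneg
  linarith

end Eigenvalues

theorem eq_smul_of_mulVec_eq_smul_of_apply_eq_zero {𝕜 : Type*} [Field 𝕜] {A : Matrix ι ι 𝕜}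
    {k : ι} {lam : 𝕜} (hA : ∀ w, A *ᵥ w = lam • w → w k = 0 → w = 0) {n v : ι → 𝕜}
    (hnk : n k ≠ 0) (hn : A *ᵥ n = lam • n) (hv : A *ᵥ v = lam • v) :
    v = (v k / n k) • n := by
  refine sub_eq_zero.1 (hA _ ?_ ?_)
  · rw [mulVec_sub, mulVec_smul, hn, hv, smul_sub, smul_comm]
  · simp [hnk]

theorem dotProduct_of_mulVec_sq_le {κ : Type*} [Fintype κ] (A : EuclideanSpace ℝ (ι × κ))
    (x : ι → ℝ) (y : κ → ℝ) :
    (x ⬝ᵥ (of fun i j => A (i, j)) *ᵥ y) ^ 2 ≤ ‖A‖ ^ 2 * ((x ⬝ᵥ x) * (y ⬝ᵥ y)) := by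
  have as_sum : x ⬝ᵥ (of fun i j => A (i, j)) *ᵥ y = ∑ p : ι × κ, A p * (x p.1 * y p.2) := by
    simp only [dotProduct, mulVec, of_apply, Finset.mul_sum, Fintype.sum_prod_type]
    exact Finset.sum_congr rfl fun i _ => Finset.sum_congr rfl fun j _ => by ring
  have norm_tensor : ∑ p : ι × κ, (x p.1 * y p.2) ^ 2 = (x ⬝ᵥ x) * (y ⬝ᵥ y) := by
    simp only [dotProduct, Fintype.sum_mul_sum, Fintype.sum_prod_type]
    exact Finset.sum_congr rfl fun i _ => Finset.sum_congr rfl fun j _ => by ring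
  rw [as_sum, ← norm_tensor, EuclideanSpace.real_norm_sq_eq]
  exact Finset.sum_mul_sq_le_sq_mul_sq _ _ _

theorem abs_dotProduct_of_mulVec_le (A : EuclideanSpace ℝ (ι × ι)) (x : ι → ℝ) :
    |x ⬝ᵥ (of fun i j => A (i, j)) *ᵥ x| ≤ ‖A‖ * (x ⬝ᵥ x) := by
  refine abs_le_of_sq_le_sq ?_ (mul_nonneg (norm_nonneg A) (dotProduct_self_star_nonneg x))
  rw [mul_pow, sq (x ⬝ᵥ x)]
  exact dotProduct_of_mulVec_sq_le A x x

end Spectral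

/-- The uniaxial Q-tensor `s (e₃ ⊗ e₃ - 1/3)` with scalar order parameter `s` and director `e₃`,
written through its diagonal entries. -/
def uniaxial (s : ℝ) : E9 := WithLp.toLp 2 fun p => diagonal ![-s / 3, -s / 3, 2 * s / 3] p.1 p.2

/-- The scalar order parameter of a Q-tensor, normalized so that `uniaxial s` has order `|s|`:
it is the `s` with `|A|² = (2/3) s²`. -/
def scalarOrder (A : E9) : ℝ := √(3 / 2) * ‖A‖

section Uniaxial

theorem toM_uniaxial (s : ℝ) : toM (uniaxial s) = diagonal ![-s / 3, -s / 3, 2 * s / 3] := rfl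

theorem uniaxial_mem_Sym0E (s : ℝ) : uniaxial s ∈ Sym0E := by
  refine ⟨isSymm_diagonal _, ?_⟩
  simp only [toM_uniaxial, trace_diagonal, Fin.sum_univ_three, cons_val]
  ring

theorem uniaxial_apply_two_two (s : ℝ) : uniaxial s (2, 2) = 2 / 3 * s := by
  simp only [uniaxial, diagonal_apply_eq, cons_val]
  ring

theorem gMagE_uniaxial (S s : ℝ) : gMagE S (uniaxial s) = 2 / 3 * (S - s) := by
  rw [gMagE, uniaxial_apply_two_two]
  ring

theorem dotProduct_toM_uniaxial_mulVec (s : ℝ) (x : Fin 3 → ℝ) :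
    x ⬝ᵥ toM (uniaxial s) *ᵥ x = s * x 2 ^ 2 + -s / 3 * (x ⬝ᵥ x) := by
  simp only [toM_uniaxial, dotProduct, mulVec_diagonal, Fin.sum_univ_three, cons_val]
  ring

theorem inner_uniaxial {A : E9} (hA : A ∈ Sym0E) (s : ℝ) :
    inner ℝ A (uniaxial s) = s * A (2, 2) := by
  have htr : A (0, 0) + A (1, 1) + A (2, 2) = 0 := by
    simpa [toM, trace, Fin.sum_univ_three] using hA.2
  simp only [PiLp.inner_apply, uniaxial, diagonal_apply, Fintype.sum_prod_type,
    RCLike.inner_apply, Real.ringHom_apply, ite_mul, zero_mul, Finset.sum_ite_eq, Finset.mem_univ,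
    ↓reduceIte, Fin.sum_univ_three, cons_val]
  linear_combination -s / 3 * htr

theorem norm_uniaxial_sq (s : ℝ) : ‖uniaxial s‖ ^ 2 = 2 / 3 * s ^ 2 := by
  rw [← real_inner_self_eq_norm_sq, inner_uniaxial (uniaxial_mem_Sym0E s), uniaxial_apply_two_two]
  ring

theorem scalarOrder_nonneg (A : E9) : 0 ≤ scalarOrder A := by
  unfold scalarOrder
  positivity

theorem norm_sq_eq_scalarOrder_sq (A : E9) : ‖A‖ ^ 2 = 2 / 3 * scalarOrder A ^ 2 := by
  rw [scalarOrder, mul_pow, Real.sq_sqrt (by norm_num)]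
  ring

theorem norm_sub_uniaxial_scalarOrder_sq {A : E9} (hA : A ∈ Sym0E) :
    ‖A - uniaxial (scalarOrder A)‖ ^ 2 =
      2 * scalarOrder A * (2 / 3 * scalarOrder A - A (2, 2)) := by
  rw [norm_sub_sq_real, inner_uniaxial hA, norm_uniaxial_sq, norm_sq_eq_scalarOrder_sq]
  ring

theorem apply_two_two_le_scalarOrder {A : E9} (hA : A ∈ Sym0E) :
    A (2, 2) ≤ 2 / 3 * scalarOrder A := by
  have cauchy_schwarz : A (2, 2) ≤ ‖A‖ * ‖uniaxial 1‖ := by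
    simpa [inner_uniaxial hA] using real_inner_le_norm A (uniaxial 1)
  have norms : (‖A‖ * ‖uniaxial 1‖) ^ 2 = (2 / 3 * scalarOrder A) ^ 2 := by
    rw [mul_pow, norm_uniaxial_sq, norm_sq_eq_scalarOrder_sq]
    ring
  exact cauchy_schwarz.trans
    (le_of_sq_le_sq norms.le (mul_nonneg (by norm_num) (scalarOrder_nonneg A)))

end Uniaxial

section SimpleMaxEigen

theorem simpleMaxEigen_of_apply_eq_zero {Q : Mat3} {lam : ℝ} {n : Fin 3 → ℝ} (k : Fin 3)
    (hn : n ⬝ᵥ n = 1) (hQn : Q *ᵥ n = lam • n)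
    (hlam : ∀ x : Fin 3 → ℝ, x ⬝ᵥ Q *ᵥ x ≤ lam * (x ⬝ᵥ x))
    (hk : ∀ w, Q *ᵥ w = lam • w → w k = 0 → w = 0) : SimpleMaxEigen Q lam n := by
  have hnk : n k ≠ 0 := fun h0 => by simp [hk n hQn h0] at hn
  refine ⟨⟨?_, hQn, fun μ v hv0 hv => ?_⟩,
    fun v hv => ⟨_, eq_smul_of_mulVec_eq_smul_of_apply_eq_zero hk hnk hQn hv⟩⟩
  · simpa only [unitVec, dotProduct, sq] using hn
  · have rayleigh := hlam v
    rw [show Q *ᵥ v = μ • v from hv, dotProduct_smul, smul_eq_mul] at rayleigh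
    exact le_of_mul_le_mul_right rayleigh (dotProduct_self_star_pos_iff.2 hv0)

theorem exists_simpleMaxEigen_of_norm_sub_uniaxial_le {A : E9} (hA : (toM A).IsSymm) {s ω : ℝ}
    (hs : 0 < s) (hω : 2 * ω < 1) (h : ‖A - uniaxial s‖ ≤ ω * s) :
    ∃ (lam : ℝ) (n : Fin 3 → ℝ), SimpleMaxEigen (toM A) lam n ∧ 1 - 2 * ω ≤ |n 2| := by
  obtain ⟨lam, n, hn, hAn, hlam⟩ := exists_eigenvector_forall_dotProduct_mulVec_le hA
  have near_uniaxial (x : Fin 3 → ℝ) :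
      |x ⬝ᵥ toM A *ᵥ x - (s * x 2 ^ 2 + -s / 3 * (x ⬝ᵥ x))| ≤ ω * s * (x ⬝ᵥ x) := by
    rw [← dotProduct_toM_uniaxial_mulVec, ← dotProduct_sub, ← sub_mulVec]
    exact (abs_dotProduct_of_mulVec_le (A - uniaxial s) x).trans
      (mul_le_mul_of_nonneg_right h (dotProduct_self_star_nonneg x))
  have eigen_le (v : Fin 3 → ℝ) (hv : toM A *ᵥ v = lam • v) :
      (1 - 2 * ω) * (v ⬝ᵥ v) ≤ v 2 ^ 2 := by
    have := sub_mul_dotProduct_self_le_of_mulVec_eq_smul near_uniaxial hlam hv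
    exact le_of_mul_le_mul_left (by linarith) hs
  refine ⟨lam, n, simpleMaxEigen_of_apply_eq_zero 2 hn hAn hlam fun w hw hw2 => ?_, ?_⟩
  · have := eigen_le w hw
    rw [hw2, zero_pow two_ne_zero] at this
    exact dotProduct_self_eq_zero.1 <|
      (nonpos_of_mul_nonpos_right this (by linarith)).antisymm (dotProduct_self_star_nonneg w)
  · have abs_le_one : |n 2| ≤ 1 := by
      rw [dotProduct, Fin.sum_univ_three] at hn
      exact sq_le_one_iff_abs_le_one _ |>.1 (by nlinarith)
    calc 1 - 2 * ω ≤ |n 2| ^ 2 := by simpa [hn] using eigen_le n hAn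
      _ ≤ |n 2| := pow_le_of_le_one (abs_nonneg _) abs_le_one two_ne_zero

end SimpleMaxEigen

section BulkPotential

theorem six_mul_sum_cube_sq_le_sum_sq_cube {x y z : ℝ} (h : x + y + z = 0) :
    6 * (x ^ 3 + y ^ 3 + z ^ 3) ^ 2 ≤ (x ^ 2 + y ^ 2 + z ^ 2) ^ 3 := by
  obtain rfl : z = -x - y := by linarith
  -- The difference of the two sides is twice the discriminant of `(X - x) (X - y) (X - z)`.
  nlinarith [sq_nonneg ((x - y) * (x + 2 * y) * (2 * x + y))]

theorem six_mul_trace_cube_sq_le_trace_sq_cube {Q : Mat3} (hQ : Q.IsSymm) (htr : Q.trace = 0) :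
    6 * (Q ^ 3).trace ^ 2 ≤ (Q ^ 2).trace ^ 3 := by
  have hH : Q.IsHermitian := by rwa [IsHermitian, conjTranspose_eq_transpose_of_trivial]
  rw [← pow_one Q, trace_pow_eq_sum_eigenvalues_pow hH, Fin.sum_univ_three] at htr
  simp only [pow_one] at htr
  simpa only [trace_pow_eq_sum_eigenvalues_pow hH, Fin.sum_univ_three] using
    six_mul_sum_cube_sq_le_sum_sq_cube htr

theorem trace_toM_sq {A : E9} (hA : (toM A).IsSymm) : (toM A ^ 2).trace = ‖A‖ ^ 2 := by
  rw [EuclideanSpace.real_norm_sq_eq, Fintype.sum_prod_type, sq (toM A), trace]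
  simp only [diag_apply, mul_apply]
  refine Finset.sum_congr rfl fun i _ => Finset.sum_congr rfl fun j _ => ?_
  change toM A i j * toM A j i = toM A i j ^ 2
  rw [hA.apply i j, sq]

theorem trace_toM_cube_le {A : E9} (hA : A ∈ Sym0E) :
    (toM A ^ 3).trace ≤ 2 / 9 * scalarOrder A ^ 3 := by
  have hs := scalarOrder_nonneg A
  have := six_mul_trace_cube_sq_le_trace_sq_cube hA.1 hA.2
  rw [trace_toM_sq hA.1, norm_sq_eq_scalarOrder_sq] at this
  exact le_of_sq_le_sq (by linarith) (by positivity)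

/-- The bulk potential `f` along the uniaxial tensors, as a function of the scalar order
parameter. -/
def uniaxialBulk (a b c C s : ℝ) : ℝ :=
  C - a / 3 * s ^ 2 - 2 * b / 27 * s ^ 3 + c / 9 * s ^ 4

variable {a b c C : ℝ}

theorem fLdG_uniaxial (s : ℝ) : fLdG a b c C (toM (uniaxial s)) = uniaxialBulk a b c C s := by
  simp only [fLdG, uniaxialBulk, toM_uniaxial, diagonal_mul_diagonal, trace_diagonal,
    Fin.sum_univ_three, cons_val]
  ring

theorem uniaxialBulk_scalarOrder_le_fLdG (hb : 0 ≤ b) {A : E9} (hA : A ∈ Sym0E) :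
    uniaxialBulk a b c C (scalarOrder A) ≤ fLdG a b c C (toM A) := by
  have cubic := mul_le_mul_of_nonneg_left (trace_toM_cube_le hA) hb
  rw [fLdG, ← sq, ← pow_succ, trace_toM_sq hA.1, norm_sq_eq_scalarOrder_sq, uniaxialBulk]
  linarith

theorem sStar_pos (ha : 0 < a) (hb : 0 < b) (hc : 0 < c) : 0 < sStar a b c := by
  unfold sStar
  positivity

theorem sStar_quadratic (ha : 0 ≤ a) (hc : 0 < c) :
    2 * c * sStar a b c ^ 2 = b * sStar a b c + 3 * a := by
  have sq_sqrt := Real.sq_sqrt (show 0 ≤ b ^ 2 + 24 * a * c by positivity)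
  unfold sStar
  generalize √(b ^ 2 + 24 * a * c) = r at *
  field_simp
  linear_combination 2 * sq_sqrt

theorem uniaxialBulk_sub_uniaxialBulk_sStar (ha : 0 ≤ a) (hc : 0 < c) (s : ℝ) :
    uniaxialBulk a b c C s - uniaxialBulk a b c C (sStar a b c) =
      (s - sStar a b c) ^ 2 * (c / 9 * s ^ 2 +
        (3 * c * sStar a b c - b) / 27 * (2 * s + sStar a b c)) := by
  have a_eq : a = (2 * c * sStar a b c ^ 2 - b * sStar a b c) / 3 := by
    linarith [sStar_quadratic (b := b) ha hc]
  generalize sStar a b c = S at *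
  subst a_eq
  unfold uniaxialBulk
  ring

theorem exists_mul_sub_sStar_sq_le_uniaxialBulk (ha : 0 < a) (hb : 0 < b) (hc : 0 < c) :
    ∃ γ > 0, ∀ C s, 0 ≤ s → γ * (s - sStar a b c) ^ 2 ≤
      uniaxialBulk a b c C s - uniaxialBulk a b c C (sStar a b c) := by
  have hS := sStar_pos ha hb hc
  have slope_pos : 0 < 3 * c * sStar a b c - b := by
    have : 0 < sStar a b c * (2 * c * sStar a b c - b) := by
      linarith [sStar_quadratic (b := b) ha.le hc]
    linarith [pos_of_mul_pos_right this hS.le, mul_pos hc hS]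
  refine ⟨(3 * c * sStar a b c - b) / 27 * sStar a b c, by positivity, fun C s hs => ?_⟩
  rw [uniaxialBulk_sub_uniaxialBulk_sStar ha.le hc, mul_comm]
  gcongr
  nlinarith [mul_nonneg slope_pos.le hs, mul_nonneg hc.le (sq_nonneg s)]

theorem uniaxialBulk_sStar_eq_zero (ha : 0 < a) (hb : 0 < b) (hc : 0 < c)
    (hC : IsLeast ((fun A => fLdG a b c C (toM A)) '' Sym0E) 0) :
    uniaxialBulk a b c C (sStar a b c) = 0 := by
  obtain ⟨⟨A, hA, hfA⟩, hmin⟩ := hC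
  obtain ⟨γ, hγ, growth⟩ := exists_mul_sub_sStar_sq_le_uniaxialBulk ha hb hc
  apply le_antisymm
  · calc uniaxialBulk a b c C (sStar a b c)
        ≤ uniaxialBulk a b c C (scalarOrder A) :=
          sub_nonneg.1 ((by positivity : 0 ≤ γ * _).trans (growth C _ (scalarOrder_nonneg A)))
      _ ≤ fLdG a b c C (toM A) := uniaxialBulk_scalarOrder_le_fLdG hb.le hA
      _ = 0 := hfA
  · rw [← fLdG_uniaxial]
    exact hmin ⟨_, uniaxial_mem_Sym0E _, rfl⟩

end BulkPotential

/-- The nonnegative potential part `ξ⁻² f + η⁻² g + C₀` of the energy density. -/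
def potentialDensity (a b c C ξ η : ℝ) (A : E9) : ℝ :=
  1 / ξ ^ 2 * fLdG a b c C (toM A) + 1 / η ^ 2 * gMagE (sStar a b c) A + C0const a b c C ξ η

section PotentialDensity

variable {a b c C ξ η : ℝ}

theorem continuous_potentialDensity : Continuous (potentialDensity a b c C ξ η) := by
  have continuous_toM : Continuous toM := continuous_matrix fun i j => by
    simp only [toM, of_apply]
    fun_prop
  unfold potentialDensity fLdG gMagE
  fun_prop

theorem bddBelow_potential (ha : 0 < a) (hb : 0 < b) (hc : 0 < c) (hξ : 0 < ξ) :
    BddBelow {v | ∃ P ∈ Sym0E,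
      v = 1 / ξ ^ 2 * fLdG a b c C (toM P) + 1 / η ^ 2 * gMagE (sStar a b c) P} := by
  obtain ⟨γ, hγ, growth⟩ := exists_mul_sub_sStar_sq_le_uniaxialBulk ha hb hc
  set S := sStar a b c
  set β := 1 / η ^ 2 * (2 / 3)
  refine ⟨1 / ξ ^ 2 * uniaxialBulk a b c C S - β ^ 2 / (4 * (1 / ξ ^ 2 * γ)), ?_⟩
  rintro _ ⟨P, hP, rfl⟩
  have bulk_ge : 1 / ξ ^ 2 * uniaxialBulk a b c C S + 1 / ξ ^ 2 * γ * (scalarOrder P - S) ^ 2 ≤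
      1 / ξ ^ 2 * fLdG a b c C (toM P) := by
    rw [mul_assoc, ← mul_add]
    gcongr
    linarith [growth C _ (scalarOrder_nonneg P),
      uniaxialBulk_scalarOrder_le_fLdG (a := a) (c := c) (C := C) hb.le hP]
  have magnetic_ge : -β * (scalarOrder P - S) ≤ 1 / η ^ 2 * gMagE S P := by
    rw [neg_mul, ← mul_neg, mul_assoc]
    gcongr
    rw [gMagE]
    linarith [apply_two_two_le_scalarOrder hP]
  have square_completed : 0 ≤ 1 / ξ ^ 2 * γ * (scalarOrder P - S) ^ 2 - β * (scalarOrder P - S) +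
      β ^ 2 / (4 * (1 / ξ ^ 2 * γ)) := by
    have : 0 < 1 / ξ ^ 2 * γ := by positivity
    generalize 1 / ξ ^ 2 * γ = α at *
    calc 0 ≤ (2 * α * (scalarOrder P - S) - β) ^ 2 / (4 * α) := by positivity
      _ = _ := by field_simp; ring
  linarith

theorem potentialDensity_nonneg (ha : 0 < a) (hb : 0 < b) (hc : 0 < c) (hξ : 0 < ξ) {A : E9}
    (hA : A ∈ Sym0E) : 0 ≤ potentialDensity a b c C ξ η A := by
  have := csInf_le (bddBelow_potential (C := C) (η := η) ha hb hc hξ) ⟨A, hA, rfl⟩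
  rw [potentialDensity, C0const]
  linarith

theorem C0const_nonneg (ha : 0 < a) (hb : 0 < b) (hc : 0 < c)
    (hC : IsLeast ((fun A => fLdG a b c C (toM A)) '' Sym0E) 0) (hξ : 0 < ξ) :
    0 ≤ C0const a b c C ξ η := by
  simpa [potentialDensity, fLdG_uniaxial, gMagE_uniaxial, uniaxialBulk_sStar_eq_zero ha hb hc hC]
    using potentialDensity_nonneg (C := C) (η := η) ha hb hc hξ
      (uniaxial_mem_Sym0E (sStar a b c))

theorem gMagE_le_potentialDensity (ha : 0 < a) (hb : 0 < b) (hc : 0 < c)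
    (hC : IsLeast ((fun A => fLdG a b c C (toM A)) '' Sym0E) 0) (hξ : 0 < ξ) {A : E9}
    (hA : A ∈ Sym0E) :
    1 / η ^ 2 * gMagE (sStar a b c) A ≤ potentialDensity a b c C ξ η A := by
  have bulk_nonneg : 0 ≤ fLdG a b c C (toM A) := hC.2 ⟨A, hA, rfl⟩
  have : 0 ≤ 1 / ξ ^ 2 * fLdG a b c C (toM A) := by positivity
  rw [potentialDensity]
  linarith [C0const_nonneg (η := η) ha hb hc hC hξ]

-- Compares `A` with the uniaxial tensor of the same norm, whose bulk energy is no larger.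
theorem scalarOrder_sub_apply_two_two_le_potentialDensity (ha : 0 < a) (hb : 0 < b) (hc : 0 < c)
    (hξ : 0 < ξ) {A : E9} (hA : A ∈ Sym0E) :
    1 / η ^ 2 * (2 / 3 * scalarOrder A - A (2, 2)) ≤ potentialDensity a b c C ξ η A := by
  have bulk_le : 1 / ξ ^ 2 * fLdG a b c C (toM (uniaxial (scalarOrder A))) ≤
      1 / ξ ^ 2 * fLdG a b c C (toM A) := by
    rw [fLdG_uniaxial]
    gcongr
    exact uniaxialBulk_scalarOrder_le_fLdG hb.le hA
  have := potentialDensity_nonneg (C := C) (η := η) ha hb hc hξ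
    (uniaxial_mem_Sym0E (scalarOrder A))
  rw [potentialDensity, gMagE_uniaxial] at this
  rw [potentialDensity, gMagE]
  linarith

theorem norm_sub_uniaxial_scalarOrder_le (ha : 0 < a) (hb : 0 < b) (hc : 0 < c)
    (hC : IsLeast ((fun A => fLdG a b c C (toM A)) '' Sym0E) 0) (hξ : 0 < ξ) (hη : 0 < η)
    {δ : ℝ} (hδ : 0 ≤ δ) (hδ' : δ ≤ 1) {A : E9} (hA : A ∈ Sym0E)
    (hdens : potentialDensity a b c C ξ η A ≤ δ * sStar a b c / 4 / η ^ 2) :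
    0 < scalarOrder A ∧ ‖A - uniaxial (scalarOrder A)‖ ≤ √δ * scalarOrder A := by
  have hS := sStar_pos ha hb hc
  have le_of_scaled {y : ℝ} (hy : 1 / η ^ 2 * y ≤ potentialDensity a b c C ξ η A) :
      y ≤ δ * sStar a b c / 4 := by
    refine le_of_mul_le_mul_left (hy.trans (hdens.trans_eq ?_)) (by positivity : 0 < 1 / η ^ 2)
    ring
  have magnetic_le := le_of_scaled (gMagE_le_potentialDensity ha hb hc hC hξ hA)
  have anisotropy_le :=
    le_of_scaled (scalarOrder_sub_apply_two_two_le_potentialDensity ha hb hc hξ hA)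
  have order_ge : sStar a b c / 2 ≤ scalarOrder A := by
    rw [gMagE] at magnetic_le
    nlinarith [apply_two_two_le_scalarOrder hA]
  have order_pos : 0 < scalarOrder A := by linarith
  refine ⟨order_pos, le_of_sq_le_sq ?_ (by positivity)⟩
  calc ‖A - uniaxial (scalarOrder A)‖ ^ 2
      = 2 * scalarOrder A * (2 / 3 * scalarOrder A - A (2, 2)) :=
        norm_sub_uniaxial_scalarOrder_sq hA
    _ ≤ 2 * scalarOrder A * (δ * sStar a b c / 4) := by gcongr
    _ = δ * scalarOrder A * (sStar a b c / 2) := by ring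
    _ ≤ δ * scalarOrder A * scalarOrder A := by gcongr
    _ = (√δ * scalarOrder A) ^ 2 := by rw [mul_pow, Real.sq_sqrt hδ]; ring

end PotentialDensity

section Energy

variable {a b c C ξ η L : ℝ} {Q G : ℝ → E9}

theorem continuousOn_of_eq_add_intervalIntegral {E : Type*} [NormedAddCommGroup E]
    [NormedSpace ℝ E] {u v : ℝ → E} {x₀ x₁ : ℝ} (hv : IntegrableOn v (Icc x₀ x₁))
    (hu : ∀ x ∈ Icc x₀ x₁, u x = u x₀ + ∫ t in x₀..x, v t) : ContinuousOn u (Icc x₀ x₁) :=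
  (continuousOn_const.add (intervalIntegral.continuousOn_primitive hv)).congr fun x hx => by
    rw [hu x hx, intervalIntegral.integral_of_le hx.1, Pi.add_apply]

theorem lintegral_potentialDensity_le_energySeg :
    ∫⁻ t in Icc 0 L, ENNReal.ofReal (potentialDensity a b c C ξ η (Q t)) ≤
      energySeg a b c C ξ η L Q G := by
  rw [setLIntegral_congr Ioo_ae_eq_Icc.symm, energySeg]
  refine lintegral_mono fun t => ENNReal.ofReal_le_ofReal ?_
  rw [potentialDensity]
  linarith [sq_nonneg ‖G t‖]

theorem volume_lt_potentialDensity_le (hQ : ContinuousOn Q (Icc 0 L)) {κ : ℝ} (hκ : 0 < κ) :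
    volume (Icc 0 L ∩ {t | κ < potentialDensity a b c C ξ η (Q t)}) ≤
      energySeg a b c C ξ η L Q G / ENNReal.ofReal κ := by
  have density_aemeasurable :
      AEMeasurable (fun t => ENNReal.ofReal (potentialDensity a b c C ξ η (Q t)))
        (volume.restrict (Icc 0 L)) :=
    ((continuous_potentialDensity.comp_continuousOn hQ).aemeasurable
      measurableSet_Icc).ennreal_ofReal
  calc volume (Icc 0 L ∩ {t | κ < potentialDensity a b c C ξ η (Q t)})
      ≤ volume.restrict (Icc 0 L)
          {t | ENNReal.ofReal κ ≤ ENNReal.ofReal (potentialDensity a b c C ξ η (Q t))} := by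
        rw [inter_comm]
        exact (Measure.le_restrict_apply _ _).trans
          (measure_mono fun t ht => ENNReal.ofReal_le_ofReal (le_of_lt ht))
    _ ≤ (∫⁻ t in Icc 0 L, ENNReal.ofReal (potentialDensity a b c C ξ η (Q t))) /
          ENNReal.ofReal κ :=
        meas_ge_le_lintegral_div density_aemeasurable (ENNReal.ofReal_pos.2 hκ).ne'
          ENNReal.ofReal_ne_top
    _ ≤ energySeg a b c C ξ η L Q G / ENNReal.ofReal κ :=
        ENNReal.div_le_div_right lintegral_potentialDensity_le_energySeg _

theorem energySeg_div_le {K m : ℝ} (hη : 0 < η) (hm : 0 < m)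
    (hE : ENNReal.ofReal η * energySeg a b c C ξ η L Q G ≤ ENNReal.ofReal K) :
    energySeg a b c C ξ η L Q G / ENNReal.ofReal (m / η ^ 2) ≤ ENNReal.ofReal (K / m * η) := by
  have energy_le : energySeg a b c C ξ η L Q G ≤ ENNReal.ofReal (K / η) := by
    rw [ENNReal.ofReal_div_of_pos hη, ENNReal.le_div_iff_mul_le
      (.inl (ENNReal.ofReal_pos.2 hη).ne') (.inl ENNReal.ofReal_ne_top), mul_comm]
    exact hE
  calc energySeg a b c C ξ η L Q G / ENNReal.ofReal (m / η ^ 2)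
      ≤ ENNReal.ofReal (K / η) / ENNReal.ofReal (m / η ^ 2) := ENNReal.div_le_div_right energy_le _
    _ = ENNReal.ofReal (K / m * η) := by
        rw [← ENNReal.ofReal_div_of_pos (by positivity)]
        congr 1
        field_simp

end Energy

theorem statement15_general {a b c C : ℝ} (ha : 0 < a) (hb : 0 < b) (hc : 0 < c)
    (hC : IsLeast ((fun A => fLdG a b c C (toM A)) '' Sym0E) 0) {δ : ℝ} (hδ : 0 < δ)
    (hδ' : δ < 1 / 4) {L η ξ K : ℝ} (hη : 0 < η) (hξ : 0 < ξ) {Q G : ℝ → E9}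
    (hQ : ∀ t ∈ Icc 0 L, Q t ∈ Sym0E) (hG : IntegrableOn G (Icc 0 L))
    (hQG : ∀ x ∈ Icc 0 L, Q x = Q 0 + ∫ t in (0 : ℝ)..x, G t)
    (hE : ENNReal.ofReal η * energySeg a b c C ξ η L Q G ≤ ENNReal.ofReal K) :
    ∃ Iδ : Set ℝ, MeasurableSet Iδ ∧ Iδ ⊆ Icc 0 L ∧
      volume (Icc 0 L \ Iδ) ≤ ENNReal.ofReal (K / (δ * sStar a b c / 4) * η) ∧
      ∀ t ∈ Iδ, ∃ (lam : ℝ) (n : Fin 3 → ℝ),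
        SimpleMaxEigen (toM (Q t)) lam n ∧ 1 - 2 * √δ ≤ |n 2| := by
  have hQc := continuousOn_of_eq_add_intervalIntegral hG hQG
  have threshold_pos : 0 < δ * sStar a b c / 4 := by linarith [mul_pos hδ (sStar_pos ha hb hc)]
  set κ := δ * sStar a b c / 4 / η ^ 2
  refine ⟨Icc 0 L ∩ (potentialDensity a b c C ξ η ∘ Q) ⁻¹' Iic κ, ?_, inter_subset_left, ?_, ?_⟩
  · exact ((continuous_potentialDensity.comp_continuousOn hQc).preimage_isClosed_of_isClosed
      isClosed_Icc isClosed_Iic).measurableSet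
  · rw [sdiff_self_inter, sdiff_eq, ← preimage_compl, compl_Iic]
    exact (volume_lt_potentialDensity_le hQc (by positivity)).trans
      (energySeg_div_le hη threshold_pos hE)
  · rintro t ⟨ht, hdens⟩
    obtain ⟨order_pos, near_uniaxial⟩ := norm_sub_uniaxial_scalarOrder_le ha hb hc hC hξ hη hδ.le
      (by linarith) (hQ t ht) hdens
    have sqrt_lt : √δ < 1 / 2 := (Real.sqrt_lt' (by norm_num)).2 (by linarith)
    exact exists_simpleMaxEigen_of_norm_sub_uniaxial_le (hQ t ht).1 order_pos (by linarith)
      near_uniaxial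

theorem statement15 (a b c C : ℝ) (ha : 0 < a) (hb : 0 < b) (hc : 0 < c)
    (hC : IsLeast ((fun A => fLdG a b c C (toM A)) '' Sym0E) 0) :
    ∃ 𝔠 > (0 : ℝ), ∃ δ₀ > (0 : ℝ), ∀ δ : ℝ, 0 < δ → δ < δ₀ →
      ∃ Cδ > (0 : ℝ), ∀ L : ℝ, 0 < L → ∀ η ξ K : ℝ, 0 < η →
        0 < ξ → ξ ≤ η ^ 2 → η ^ 2 ≤ 1 → 0 < K →
        ∀ Q G : ℝ → E9,
          (∀ t ∈ Icc 0 L, Q t ∈ Sym0E) →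
          IntegrableOn G (Icc 0 L) →
          IntegrableOn (fun t => ‖G t‖ ^ 2) (Icc 0 L) →
          (∀ x ∈ Icc 0 L, Q x = Q 0 + ∫ t in (0 : ℝ)..x, G t) →
          ENNReal.ofReal η * energySeg a b c C ξ η L Q G ≤ ENNReal.ofReal K →
          ∃ Iδ : Set ℝ, MeasurableSet Iδ ∧ Iδ ⊆ Icc 0 L ∧
            volume (Icc 0 L \ Iδ) ≤ ENNReal.ofReal ((K + 1) / Cδ * η) ∧
            ∀ t ∈ Iδ, ∃ (lam : ℝ) (n : Fin 3 → ℝ),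
              SimpleMaxEigen (toM (Q t)) lam n ∧ 1 - 𝔠 * Real.sqrt δ ≤ |n 2| := by
  refine ⟨2, two_pos, 1 / 4, by norm_num, fun δ hδ hδ' => ⟨δ * sStar a b c / 4,
    by linarith [mul_pos hδ (sStar_pos ha hb hc)],
    fun L _ η ξ K hη hξ _ _ _ Q G hQ hG _ hQG hE => ?_⟩⟩
  have hS := sStar_pos ha hb hc
  obtain ⟨I, hI, hIL, hvol, heig⟩ := statement15_general ha hb hc hC hδ hδ' hη hξ hQ hG hQG hE
  exact ⟨I, hI, hIL, hvol.trans (ENNReal.ofReal_le_ofReal (by gcongr; linarith)), heig⟩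
end
end

section
/- A matrix Q ∈ Sym₀ belongs to 𝒯 if and only if there exist λ > 0, a unit vector n = (n₁, n₂, 0) ∈ ℝ³, and a symmetric 2×2 real matrix M' with tr(M') = 1 and ⟨M'v, v⟩ > −1 for all unit vectors v ∈ ℝ², such that Q = λ( n⊗n − Rₙᵀ M Rₙ ), where M is the 3×3 symmetric matrix whose upper-left 2×2 block is M' and whose third row and column vanish, and Rₙ is the rotation matrix Rₙ = [[n₂², −n₁n₂, −n₁], [−n₁n₂, n₁², −n₂], [n₁, n₂, 0]] (the rotation about the axis n×e₃ taking n to e₃). Moreover, such a Q is uniaxial, i.e. Q = s( m⊗m − (1/3)I ) for some s > 0 and unit vector m, if and only if M' = (1/2)·Id₂. -/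
/- STATEMENT 16: Q ∈ Sym₀ belongs to 𝒯 iff Q = λ(n⊗n − RₙᵀMRₙ) for some λ > 0, unit
n = (n₁,n₂,0), and symmetric 2×2 M' with tr M' = 1 and ⟨M'v,v⟩ > −1 for unit v, where
M has upper-left block M' and vanishing third row/column, and
Rₙ = [[n₂²,−n₁n₂,−n₁],[−n₁n₂,n₁²,−n₂],[n₁,n₂,0]]. Moreover such a Q is uniaxial
iff M' = ½·Id₂. -/

noncomputable section

open Matrix

def Sym0 : Set Mat3 := {Q | Q.IsSymm ∧ Q.trace = 0}

def uniax (s : ℝ) (n : Fin 3 → ℝ) : Mat3 :=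
  s • (Matrix.vecMulVec n n - (1 / 3 : ℝ) • (1 : Mat3))

/-- 𝒯 ⊂ Sym₀. -/
def TsetM : Set Mat3 :=
  {Q | Q ∈ Sym0 ∧ Q ≠ 0 ∧
    ∃ (lam : ℝ) (n : Fin 3 → ℝ), SimpleMaxEigen Q lam n ∧ n 2 = 0}

/-- The rotation about n × e₃ taking n = (n₁,n₂,0) to e₃. -/
def Rn (n₁ n₂ : ℝ) : Mat3 :=
  !![n₂ ^ 2, -(n₁ * n₂), -n₁; -(n₁ * n₂), n₁ ^ 2, -n₂; n₁, n₂, 0]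

/-- The 3×3 matrix with upper-left 2×2 block [[m11,m12],[m12,m22]] and vanishing third
row and column. -/
def Mmat (m11 m12 m22 : ℝ) : Mat3 := !![m11, m12, 0; m12, m22, 0; 0, 0, 0]

/-- ⟨M'v,v⟩ > −1 for all unit v ∈ ℝ². -/
def MprimeCond (m11 m12 m22 : ℝ) : Prop :=
  ∀ v₁ v₂ : ℝ, v₁ ^ 2 + v₂ ^ 2 = 1 →
    -1 < m11 * v₁ ^ 2 + 2 * m12 * v₁ * v₂ + m22 * v₂ ^ 2

/-- The parametrized matrix λ(n⊗n − RₙᵀMRₙ). -/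
def Tparam (lam n₁ n₂ m11 m12 m22 : ℝ) : Mat3 :=
  lam • (Matrix.vecMulVec ![n₁, n₂, 0] ![n₁, n₂, 0] -
    (Rn n₁ n₂)ᵀ * Mmat m11 m12 m22 * Rn n₁ n₂)

/-!
For symmetric `Q` the largest eigenvalue `l` is simple with unit eigenvector `n` exactly when
`Q n = l n` and `⟨Q w, w⟩ < l |w|²` for all `w ≠ 0` orthogonal to `n`: the matrix `l - Q` is
positive semidefinite, and its quadratic form vanishes only on its kernel. Conjugating by `Rₙ`
moves `n` to `e₃`, where `Q n = l n` says that `Q` becomes `l (e₃ ⊗ e₃ - M)`; the strict inequality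
on `e₃^⊥` is then the condition `⟨M'v, v⟩ > -1`, and vanishing trace is `tr M' = 1`. The same
conjugation reduces uniaxiality to a comparison of matrix entries.
-/

section QuadraticForm

variable {ι : Type*} [Fintype ι] {A : Matrix ι ι ℝ} {l : ℝ}

lemma posSemidef_smul_one_sub_of_eigenvalue_le [DecidableEq ι] (hA : A.IsSymm)
    (hmax : ∀ (μ : ℝ) (v : ι → ℝ), v ≠ 0 → A *ᵥ v = μ • v → μ ≤ l) :
    (l • (1 : Matrix ι ι ℝ) - A).PosSemidef := by
  have hB : (l • (1 : Matrix ι ι ℝ) - A).IsHermitian := by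
    simp [IsHermitian, conjTranspose_eq_transpose_of_trivial, hA.eq]
  refine hB.posSemidef_iff_eigenvalues_nonneg.mpr fun i => ?_
  have hne : ⇑(hB.eigenvectorBasis i) ≠ 0 := fun h =>
    hB.eigenvectorBasis.orthonormal.ne_zero i (WithLp.ofLp_injective 2 h)
  have heig : A *ᵥ hB.eigenvectorBasis i = (l - hB.eigenvalues i) • ⇑(hB.eigenvectorBasis i) := by
    rw [sub_smul, ← hB.mulVec_eigenvectorBasis i, sub_mulVec, smul_mulVec, one_mulVec,
      sub_sub_cancel]
  simpa using hmax _ _ hne heig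

lemma dotProduct_mulVec_lt_of_eigenvalue_le (hA : A.IsSymm)
    (hmax : ∀ (μ : ℝ) (v : ι → ℝ), v ≠ 0 → A *ᵥ v = μ • v → μ ≤ l)
    {v : ι → ℝ} (hv : A *ᵥ v ≠ l • v) : v ⬝ᵥ A *ᵥ v < l * (v ⬝ᵥ v) := by
  classical
  have hpsd := posSemidef_smul_one_sub_of_eigenvalue_le hA hmax
  have hmulVec : (l • (1 : Matrix ι ι ℝ) - A) *ᵥ v = l • v - A *ᵥ v := by
    rw [sub_mulVec, smul_mulVec, one_mulVec]
  have hne : star v ⬝ᵥ (l • (1 : Matrix ι ι ℝ) - A) *ᵥ v ≠ 0 := fun h =>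
    hv (sub_eq_zero.mp (hmulVec ▸ (hpsd.dotProduct_mulVec_zero_iff v).mp h)).symm
  have hpos := (hpsd.dotProduct_mulVec_nonneg v).lt_of_ne' hne
  rw [hmulVec, star_trivial, dotProduct_sub, dotProduct_smul, smul_eq_mul] at hpos
  exact sub_pos.mp hpos

lemma pos_of_eigenvalue_le_of_trace_eq_zero (hA : A.IsSymm) (htr : A.trace = 0) (hne : A ≠ 0)
    (hmax : ∀ (μ : ℝ) (v : ι → ℝ), v ≠ 0 → A *ᵥ v = μ • v → μ ≤ l) : 0 < l := by
  classical
  by_contra! hl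
  have hpsd : (-A).PosSemidef := by
    simpa using posSemidef_smul_one_sub_of_eigenvalue_le hA
      fun μ v hv hAv => (hmax μ v hv hAv).trans hl
  exact hne (neg_eq_zero.mp (hpsd.trace_eq_zero_iff.mp (by rw [trace_neg, htr, neg_zero])))

lemma eq_smul_of_le_eigenvalue_of_dotProduct_mulVec_lt {n v : ι → ℝ} {μ : ℝ}
    (hn : n ⬝ᵥ n = 1) (hAn : A *ᵥ n = l • n)
    (hlt : ∀ w : ι → ℝ, w ≠ 0 → w ⬝ᵥ n = 0 → w ⬝ᵥ A *ᵥ w < l * (w ⬝ᵥ w))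
    (hAv : A *ᵥ v = μ • v) (hμ : l ≤ μ) : v = (v ⬝ᵥ n) • n := by
  set w := v - (v ⬝ᵥ n) • n with hw
  have hwn : w ⬝ᵥ n = 0 := by rw [hw, sub_dotProduct, smul_dotProduct, hn]; simp
  have hwv : w ⬝ᵥ w = w ⬝ᵥ v := calc
    w ⬝ᵥ w = w ⬝ᵥ (v - (v ⬝ᵥ n) • n) := rfl
    _ = w ⬝ᵥ v := by rw [dotProduct_sub, dotProduct_smul, hwn, smul_zero, sub_zero]
  have hform : w ⬝ᵥ A *ᵥ w = μ * (w ⬝ᵥ w) := by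
    rw [hwv, hw, mulVec_sub, mulVec_smul, hAv, hAn, ← hw, dotProduct_sub]
    simp only [dotProduct_smul, hwn, smul_eq_mul, mul_zero, sub_zero]
  refine sub_eq_zero.mp (by_contra fun hw0 => ?_)
  have hww : 0 ≤ w ⬝ᵥ w := Finset.sum_nonneg fun i _ => mul_self_nonneg (w i)
  exact (hlt w hw0 hwn).not_ge (hform ▸ mul_le_mul_of_nonneg_right hμ hww)

end QuadraticForm

section Orthogonal

variable {ι α : Type*} [Fintype ι] [DecidableEq ι] [CommRing α] {R : Matrix ι ι α}

lemma transpose_mem_orthogonalGroup (hR : R ∈ orthogonalGroup ι α) :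
    Rᵀ ∈ orthogonalGroup ι α := by
  rw [mem_orthogonalGroup_iff, transpose_transpose, (mem_orthogonalGroup_iff' _ _).mp hR]

lemma mulVec_bijective_of_mem_orthogonalGroup (hR : R ∈ orthogonalGroup ι α) :
    Function.Bijective R.mulVec := by
  refine Function.bijective_iff_has_inverse.mpr ⟨Rᵀ.mulVec, fun v => ?_, fun v => ?_⟩
  · rw [mulVec_mulVec, (mem_orthogonalGroup_iff' _ _).mp hR, one_mulVec]
  · rw [mulVec_mulVec, (mem_orthogonalGroup_iff _ _).mp hR, one_mulVec]

end Orthogonal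

section SimpleMaxEigen

variable {Q P R : Mat3} {l μ : ℝ} {n v : Fin 3 → ℝ}

lemma unitVec_iff_dotProduct_self : unitVec n ↔ n ⬝ᵥ n = 1 := by
  simp only [unitVec, dotProduct, sq]

lemma unitVec_cons_cons_zero_iff {n₁ n₂ : ℝ} :
    unitVec ![n₁, n₂, 0] ↔ n₁ ^ 2 + n₂ ^ 2 = 1 := by
  simp [unitVec, Fin.sum_univ_three]

lemma eq_cons_cons_zero_of_apply_two_eq_zero (hv : v 2 = 0) : v = ![v 0, v 1, 0] := by
  ext i
  fin_cases i <;> simp [hv]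

lemma unitVec.ne_zero (hn : unitVec n) : n ≠ 0 := by
  rintro rfl
  simp [unitVec] at hn

theorem simpleMaxEigen_iff_dotProduct_mulVec_lt (hQ : Q.IsSymm) :
    SimpleMaxEigen Q l n ↔ unitVec n ∧ IsEigen Q l n ∧
      ∀ w : Fin 3 → ℝ, w ≠ 0 → w ⬝ᵥ n = 0 → w ⬝ᵥ Q *ᵥ w < l * (w ⬝ᵥ w) := by
  constructor
  · rintro ⟨⟨hn, hQn, hmax⟩, hsimple⟩
    refine ⟨hn, hQn, fun w hw0 hwn => dotProduct_mulVec_lt_of_eigenvalue_le hQ hmax fun hQw => ?_⟩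
    obtain ⟨t, rfl⟩ := hsimple w hQw
    rw [smul_dotProduct, unitVec_iff_dotProduct_self.mp hn, smul_eq_mul, mul_one] at hwn
    exact hw0 (by rw [hwn, zero_smul])
  · rintro ⟨hn, hQn, hlt⟩
    have hparallel : ∀ (μ : ℝ) (v : Fin 3 → ℝ), IsEigen Q μ v → l ≤ μ → v = (v ⬝ᵥ n) • n :=
      fun μ v => eq_smul_of_le_eigenvalue_of_dotProduct_mulVec_lt
        (unitVec_iff_dotProduct_self.mp hn) hQn hlt
    refine ⟨⟨hn, hQn, fun μ v hv0 hQv => le_of_not_gt fun hμ => hμ.ne' ?_⟩,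
      fun v hQv => ⟨_, hparallel l v hQv le_rfl⟩⟩
    have hQv' : Q *ᵥ v = l • v := by
      rw [hparallel μ v hQv hμ.le, mulVec_smul, show Q *ᵥ n = l • n from hQn, smul_comm]
    exact smul_left_injective ℝ hv0 (hQv.symm.trans hQv')

lemma isEigen_transpose_mul_mul_iff (hR : R ∈ orthogonalGroup (Fin 3) ℝ) :
    IsEigen (Rᵀ * P * R) μ v ↔ IsEigen P μ (R *ᵥ v) := by
  have hinj : Function.Injective Rᵀ.mulVec := (mulVec_bijective_of_mem_orthogonalGroup
    (transpose_mem_orthogonalGroup hR)).injective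
  have hv : μ • v = Rᵀ *ᵥ (μ • R *ᵥ v) := by
    rw [mulVec_smul, mulVec_mulVec, (mem_orthogonalGroup_iff' _ _).mp hR, one_mulVec]
  rw [IsEigen, IsEigen, hv, ← mulVec_mulVec, ← mulVec_mulVec, hinj.eq_iff]

lemma unitVec_mulVec_iff (hR : R ∈ orthogonalGroup (Fin 3) ℝ) :
    unitVec (R *ᵥ v) ↔ unitVec v := by
  rw [unitVec_iff_dotProduct_self, unitVec_iff_dotProduct_self, dotProduct_mulVec,
    ← mulVec_transpose, mulVec_mulVec, (mem_orthogonalGroup_iff' _ _).mp hR, one_mulVec]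

theorem simpleMaxEigen_transpose_mul_mul_iff (hR : R ∈ orthogonalGroup (Fin 3) ℝ) :
    SimpleMaxEigen (Rᵀ * P * R) l n ↔ SimpleMaxEigen P l (R *ᵥ n) := by
  have hbij := mulVec_bijective_of_mem_orthogonalGroup hR
  have hne (v : Fin 3 → ℝ) : R *ᵥ v ≠ 0 ↔ v ≠ 0 :=
    hbij.injective.ne_iff' (mulVec_zero R)
  refine and_congr (and_congr (unitVec_mulVec_iff hR).symm (and_congr
    (isEigen_transpose_mul_mul_iff hR) (forall_congr' fun μ => ?_))) ?_
  · refine Iff.trans ?_ hbij.surjective.forall.symm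
    simp only [isEigen_transpose_mul_mul_iff hR, hne]
  · refine Iff.trans ?_ hbij.surjective.forall.symm
    simp only [isEigen_transpose_mul_mul_iff hR, ← mulVec_smul, hbij.injective.eq_iff]

lemma transpose_mul_mul_mem_Sym0 (hR : R ∈ orthogonalGroup (Fin 3) ℝ) (hP : P ∈ Sym0) :
    Rᵀ * P * R ∈ Sym0 := by
  constructor
  · rw [IsSymm, transpose_mul, transpose_mul, transpose_transpose, hP.1.eq, Matrix.mul_assoc]
  · rw [trace_mul_comm, ← Matrix.mul_assoc, (mem_orthogonalGroup_iff _ _).mp hR, Matrix.one_mul,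
      hP.2]

theorem mem_TsetM_iff : Q ∈ TsetM ↔ Q ∈ Sym0 ∧ ∃ l n₁ n₂ : ℝ, 0 < l ∧
    SimpleMaxEigen Q l ![n₁, n₂, 0] := by
  constructor
  · rintro ⟨hQ, hQ0, l, n, hn, hn2⟩
    rw [eq_cons_cons_zero_of_apply_two_eq_zero hn2] at hn
    exact ⟨hQ, l, n 0, n 1, pos_of_eigenvalue_le_of_trace_eq_zero hQ.1 hQ.2 hQ0 hn.1.2.2, hn⟩
  · rintro ⟨hQ, l, n₁, n₂, hl, hn⟩
    refine ⟨hQ, ?_, l, _, hn, rfl⟩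
    rintro rfl
    have hln : (0 : Mat3) *ᵥ ![n₁, n₂, 0] = l • ![n₁, n₂, 0] := hn.1.2.1
    rw [zero_mulVec] at hln
    exact smul_ne_zero hl.ne' hn.1.1.ne_zero hln.symm

end SimpleMaxEigen

section NormalForm

variable {P : Mat3} {l m11 m12 m22 : ℝ}

/-- The matrix `l (e₃ ⊗ e₃ - M)`, which is what `Tparam` becomes in the frame given by `Rn`. -/
def normalForm (l m11 m12 m22 : ℝ) : Mat3 :=
  l • (vecMulVec ![0, 0, 1] ![0, 0, 1] - Mmat m11 m12 m22)

lemma normalForm_eq_of (l m11 m12 m22 : ℝ) : normalForm l m11 m12 m22 =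
    !![-(l * m11), -(l * m12), 0; -(l * m12), -(l * m22), 0; 0, 0, l] := by
  ext i j
  fin_cases i <;> fin_cases j <;> simp [normalForm, Mmat, vecHead, vecTail]

lemma isSymm_normalForm (l m11 m12 m22 : ℝ) : (normalForm l m11 m12 m22).IsSymm := by
  rw [normalForm_eq_of]
  ext i j
  fin_cases i <;> fin_cases j <;> rfl

lemma trace_normalForm (l m11 m12 m22 : ℝ) :
    (normalForm l m11 m12 m22).trace = l * (1 - (m11 + m22)) := by
  rw [normalForm_eq_of, trace_fin_three_of]
  ring

lemma isEigen_normalForm (l m11 m12 m22 : ℝ) :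
    IsEigen (normalForm l m11 m12 m22) l ![0, 0, 1] := by
  rw [IsEigen, normalForm_eq_of]
  ext i
  fin_cases i <;> simp

lemma dotProduct_normalForm_mulVec (l m11 m12 m22 x y : ℝ) :
    ![x, y, 0] ⬝ᵥ normalForm l m11 m12 m22 *ᵥ ![x, y, 0] =
      l * -(m11 * x ^ 2 + 2 * m12 * x * y + m22 * y ^ 2) := by
  rw [normalForm_eq_of]
  simp only [dotProduct, mulVec, Fin.sum_univ_three, of_apply, cons_val]
  ring

lemma exists_eq_normalForm (hP : P ∈ Sym0) (hl : l ≠ 0) (heig : IsEigen P l ![0, 0, 1]) :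
    ∃ m11 m12 m22 : ℝ, m11 + m22 = 1 ∧ P = normalForm l m11 m12 m22 := by
  obtain ⟨hsymm, htr⟩ := hP
  have hcol : ∀ i, P i 2 = l * ![0, 0, 1] i := fun i => by
    simpa [mulVec, dotProduct, Fin.sum_univ_three] using congrFun heig i
  have h02 : P 0 2 = 0 := by simpa using hcol 0
  have h12 : P 1 2 = 0 := by simpa using hcol 1
  have h22 : P 2 2 = l := by simpa using hcol 2
  rw [trace_fin_three, h22] at htr
  refine ⟨-(P 0 0) / l, -(P 0 1) / l, -(P 1 1) / l, by field_simp; linarith, ?_⟩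
  rw [normalForm_eq_of, eta_fin_three P, hsymm.apply 0 1, hsymm.apply 0 2, hsymm.apply 1 2,
    h02, h12, h22]
  simp [mul_div_cancel₀, hl]

lemma mprimeCond_iff_of_ne_zero : MprimeCond m11 m12 m22 ↔ ∀ x y : ℝ, x ^ 2 + y ^ 2 ≠ 0 →
    -(m11 * x ^ 2 + 2 * m12 * x * y + m22 * y ^ 2) < x ^ 2 + y ^ 2 := by
  constructor
  · intro hM x y hxy
    have hr : 0 < x ^ 2 + y ^ 2 := lt_of_le_of_ne (by positivity) hxy.symm
    set r := √(x ^ 2 + y ^ 2)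
    have hr0 : 0 < r := Real.sqrt_pos.mpr hr
    have hr2 : r ^ 2 = x ^ 2 + y ^ 2 := Real.sq_sqrt hr.le
    have hunit : (x / r) ^ 2 + (y / r) ^ 2 = 1 := by field_simp; exact hr2.symm
    have hform : m11 * (x / r) ^ 2 + 2 * m12 * (x / r) * (y / r) + m22 * (y / r) ^ 2 =
        (m11 * x ^ 2 + 2 * m12 * x * y + m22 * y ^ 2) / r ^ 2 := by field_simp
    have hlt := hM _ _ hunit
    rw [hform, lt_div_iff₀ (by positivity), hr2] at hlt
    linarith
  · intro hM x y hxy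
    have hlt := hM x y (by simp [hxy])
    linarith

theorem simpleMaxEigen_normalForm_iff (hl : 0 < l) :
    SimpleMaxEigen (normalForm l m11 m12 m22) l ![0, 0, 1] ↔ MprimeCond m11 m12 m22 := by
  have hunit : unitVec ![0, 0, 1] := by simp [unitVec, Fin.sum_univ_three]
  have hform : ∀ x y : ℝ, (![x, y, 0] ⬝ᵥ normalForm l m11 m12 m22 *ᵥ ![x, y, 0] <
      l * (![x, y, 0] ⬝ᵥ ![x, y, 0])) ↔
        -(m11 * x ^ 2 + 2 * m12 * x * y + m22 * y ^ 2) < x ^ 2 + y ^ 2 := fun x y => by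
    rw [dotProduct_normalForm_mulVec, mul_lt_mul_iff_right₀ hl]
    simp [sq]
  have hne : ∀ x y : ℝ, ![x, y, 0] ≠ 0 ↔ x ^ 2 + y ^ 2 ≠ 0 := fun x y => by
    rw [ne_eq, ne_eq, ← dotProduct_self_eq_zero]
    simp [sq]
  rw [simpleMaxEigen_iff_dotProduct_mulVec_lt (isSymm_normalForm ..), mprimeCond_iff_of_ne_zero]
  simp only [hunit, isEigen_normalForm, true_and]
  constructor
  · intro h x y hxy
    exact (hform x y).mp (h _ ((hne x y).mpr hxy) (by simp))
  · intro h w hw0 hw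
    have hw2 : w 2 = 0 := by simpa [dotProduct, Fin.sum_univ_three] using hw
    rw [eq_cons_cons_zero_of_apply_two_eq_zero hw2] at hw0 ⊢
    exact (hform _ _).mpr (h _ _ ((hne _ _).mp hw0))

end NormalForm

section Rotation

variable {Q : Mat3} {l n₁ n₂ m11 m12 m22 : ℝ}

lemma Rn_mem_orthogonalGroup (hn : n₁ ^ 2 + n₂ ^ 2 = 1) :
    Rn n₁ n₂ ∈ orthogonalGroup (Fin 3) ℝ := by
  rw [mem_orthogonalGroup_iff]
  ext i j
  fin_cases i <;> fin_cases j <;> simp [Rn, mul_apply, Fin.sum_univ_three] <;> grind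

lemma Rn_mulVec_axis (hn : n₁ ^ 2 + n₂ ^ 2 = 1) : Rn n₁ n₂ *ᵥ ![n₁, n₂, 0] = ![0, 0, 1] := by
  ext i
  fin_cases i <;> simp [Rn] <;> grind

lemma Tparam_eq_transpose_mul_normalForm_mul (l n₁ n₂ m11 m12 m22 : ℝ) :
    Tparam l n₁ n₂ m11 m12 m22 = (Rn n₁ n₂)ᵀ * normalForm l m11 m12 m22 * Rn n₁ n₂ := by
  have haxis : ![0, 0, 1] ᵥ* Rn n₁ n₂ = ![n₁, n₂, 0] := by
    ext i
    fin_cases i <;> simp [Rn]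
  rw [Tparam, normalForm, Matrix.mul_smul, Matrix.smul_mul, Matrix.mul_sub, Matrix.sub_mul,
    mul_vecMulVec, vecMulVec_mul, mulVec_transpose, haxis]

lemma Tparam_mem_Sym0 (hn : n₁ ^ 2 + n₂ ^ 2 = 1) (htr : m11 + m22 = 1) :
    Tparam l n₁ n₂ m11 m12 m22 ∈ Sym0 := by
  rw [Tparam_eq_transpose_mul_normalForm_mul]
  refine transpose_mul_mul_mem_Sym0 (Rn_mem_orthogonalGroup hn) ⟨isSymm_normalForm .., ?_⟩
  rw [trace_normalForm, htr, sub_self, mul_zero]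

theorem simpleMaxEigen_Tparam_iff (hl : 0 < l) (hn : n₁ ^ 2 + n₂ ^ 2 = 1) :
    SimpleMaxEigen (Tparam l n₁ n₂ m11 m12 m22) l ![n₁, n₂, 0] ↔ MprimeCond m11 m12 m22 := by
  rw [Tparam_eq_transpose_mul_normalForm_mul,
    simpleMaxEigen_transpose_mul_mul_iff (Rn_mem_orthogonalGroup hn), Rn_mulVec_axis hn,
    simpleMaxEigen_normalForm_iff hl]

theorem exists_eq_Tparam (hQ : Q ∈ Sym0) (hl : l ≠ 0) (hn : n₁ ^ 2 + n₂ ^ 2 = 1)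
    (heig : IsEigen Q l ![n₁, n₂, 0]) :
    ∃ m11 m12 m22 : ℝ, m11 + m22 = 1 ∧ Q = Tparam l n₁ n₂ m11 m12 m22 := by
  set R := Rn n₁ n₂
  have hR : R ∈ orthogonalGroup (Fin 3) ℝ := Rn_mem_orthogonalGroup hn
  have hRTR : Rᵀ * R = 1 := (mem_orthogonalGroup_iff' _ _).mp hR
  have hconj : Q = Rᵀ * (R * Q * Rᵀ) * R := calc
    Q = (Rᵀ * R) * Q * (Rᵀ * R) := by rw [hRTR, Matrix.one_mul, Matrix.mul_one]
    _ = Rᵀ * (R * Q * Rᵀ) * R := by simp only [Matrix.mul_assoc]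
  have hP : R * Q * Rᵀ ∈ Sym0 := by
    simpa using transpose_mul_mul_mem_Sym0 (transpose_mem_orthogonalGroup hR) hQ
  rw [hconj, isEigen_transpose_mul_mul_iff hR, Rn_mulVec_axis hn] at heig
  obtain ⟨m11, m12, m22, htr, hform⟩ := exists_eq_normalForm hP hl heig
  exact ⟨m11, m12, m22, htr, by
    rw [Tparam_eq_transpose_mul_normalForm_mul, ← hform, ← hconj]⟩

end Rotation

section Uniaxial

variable {P R : Mat3} {l n₁ n₂ m11 m12 m22 : ℝ}

/-- Uniaxiality `Q = s (m ⊗ m - I / 3)`, `m` a unit vector, with positive scalar order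
parameter `s`; this notion is invariant under conjugation by orthogonal matrices. -/
def IsUniaxial (Q : Mat3) : Prop := ∃ s : ℝ, 0 < s ∧ ∃ m : Fin 3 → ℝ, unitVec m ∧ Q = uniax s m

lemma transpose_mul_uniax_mul (hR : R ∈ orthogonalGroup (Fin 3) ℝ) (s : ℝ) (m : Fin 3 → ℝ) :
    Rᵀ * uniax s (R *ᵥ m) * R = uniax s m := by
  have hRTR : Rᵀ * R = 1 := (mem_orthogonalGroup_iff' _ _).mp hR
  have hm : (R *ᵥ m) ᵥ* R = m := by rw [← mulVec_transpose, mulVec_mulVec, hRTR, one_mulVec]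
  rw [uniax, uniax, Matrix.mul_smul, Matrix.smul_mul, Matrix.mul_sub, Matrix.sub_mul,
    mul_vecMulVec, vecMulVec_mul, mulVec_transpose, hm, Matrix.mul_smul, Matrix.smul_mul,
    Matrix.mul_one, hRTR]

lemma isUniaxial_transpose_mul_mul_iff (hR : R ∈ orthogonalGroup (Fin 3) ℝ) :
    IsUniaxial (Rᵀ * P * R) ↔ IsUniaxial P := by
  have hRT := transpose_mem_orthogonalGroup hR
  have hcancel : ∀ A B : Mat3, Rᵀ * A * R = Rᵀ * B * R ↔ A = B := fun A B => by
    rw [(IsUnit.of_mul_eq_one _ ((mem_orthogonalGroup_iff _ _).mp hR)).mul_left_inj,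
      (IsUnit.of_mul_eq_one _ ((mem_orthogonalGroup_iff _ _).mp hRT)).mul_right_inj]
  refine exists_congr fun s => and_congr_right fun _ => ?_
  refine Iff.trans ?_ (mulVec_bijective_of_mem_orthogonalGroup hR).surjective.exists.symm
  simp only [unitVec_mulVec_iff hR, ← hcancel P, transpose_mul_uniax_mul hR]

lemma isUniaxial_normalForm_iff (hl : 0 < l) :
    IsUniaxial (normalForm l m11 m12 m22) ↔ m11 = 1 / 2 ∧ m12 = 0 ∧ m22 = 1 / 2 := by
  constructor
  · rintro ⟨s, hs, k, hk, heq⟩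
    rw [normalForm_eq_of] at heq
    have entry (i j : Fin 3) := congrFun (congrFun heq i) j
    simp only [uniax, Matrix.smul_apply, Matrix.sub_apply, vecMulVec_apply, smul_eq_mul] at entry
    have h00 : -(l * m11) = s * (k 0 * k 0 - 1 / 3) := by simpa using entry 0 0
    have h01 : -(l * m12) = s * (k 0 * k 1) := by simpa using entry 0 1
    have h11 : -(l * m22) = s * (k 1 * k 1 - 1 / 3) := by simpa using entry 1 1
    have h22 : l = s * (k 2 * k 2 - 1 / 3) := by simpa using entry 2 2
    have h02 : k 0 = 0 ∨ k 2 = 0 := by simpa [hs.ne'] using entry 0 2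
    have h12 : k 1 = 0 ∨ k 2 = 0 := by simpa [hs.ne'] using entry 1 2
    have hk2 : k 2 ≠ 0 := fun h => by rw [h] at h22; linarith
    have hk0 : k 0 = 0 := h02.resolve_right hk2
    have hk1 : k 1 = 0 := h12.resolve_right hk2
    have hk22 : k 2 * k 2 = 1 := by simpa [unitVec, Fin.sum_univ_three, hk0, hk1, sq] using hk
    rw [hk22] at h22
    rw [hk0] at h00 h01
    rw [hk1] at h11
    refine ⟨mul_left_cancel₀ hl.ne' ?_, mul_left_cancel₀ hl.ne' ?_, mul_left_cancel₀ hl.ne' ?_⟩ <;>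
      linarith
  · rintro ⟨rfl, rfl, rfl⟩
    refine ⟨3 / 2 * l, by positivity, ![0, 0, 1], by simp [unitVec, Fin.sum_univ_three], ?_⟩
    rw [normalForm_eq_of]
    ext i j
    fin_cases i <;> fin_cases j <;> simp [uniax] <;> ring

theorem isUniaxial_Tparam_iff (hl : 0 < l) (hn : n₁ ^ 2 + n₂ ^ 2 = 1) :
    IsUniaxial (Tparam l n₁ n₂ m11 m12 m22) ↔ m11 = 1 / 2 ∧ m12 = 0 ∧ m22 = 1 / 2 := by
  rw [Tparam_eq_transpose_mul_normalForm_mul,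
    isUniaxial_transpose_mul_mul_iff (Rn_mem_orthogonalGroup hn), isUniaxial_normalForm_iff hl]

end Uniaxial

theorem statement16_general :
    (∀ Q : Mat3,
      (Q ∈ TsetM ↔ ∃ lam n₁ n₂ m11 m12 m22 : ℝ, 0 < lam ∧ n₁ ^ 2 + n₂ ^ 2 = 1 ∧
        m11 + m22 = 1 ∧ MprimeCond m11 m12 m22 ∧
        Q = Tparam lam n₁ n₂ m11 m12 m22)) ∧
    (∀ lam n₁ n₂ m11 m12 m22 : ℝ, 0 < lam → n₁ ^ 2 + n₂ ^ 2 = 1 →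
      ((∃ s : ℝ, 0 < s ∧ ∃ m : Fin 3 → ℝ, unitVec m ∧
          Tparam lam n₁ n₂ m11 m12 m22 = uniax s m) ↔
        (m11 = 1 / 2 ∧ m12 = 0 ∧ m22 = 1 / 2))) := by
  refine ⟨fun Q => ⟨fun hQ => ?_, ?_⟩, fun lam n₁ n₂ m11 m12 m22 => isUniaxial_Tparam_iff⟩
  · obtain ⟨hsym, l, n₁, n₂, hl, hmax⟩ := mem_TsetM_iff.mp hQ
    have hn := unitVec_cons_cons_zero_iff.mp hmax.1.1
    obtain ⟨m11, m12, m22, htr, rfl⟩ := exists_eq_Tparam hsym hl.ne' hn hmax.1.2.1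
    exact ⟨l, n₁, n₂, m11, m12, m22, hl, hn, htr, (simpleMaxEigen_Tparam_iff hl hn).mp hmax, rfl⟩
  · rintro ⟨l, n₁, n₂, m11, m12, m22, hl, hn, htr, hM, rfl⟩
    exact mem_TsetM_iff.mpr ⟨Tparam_mem_Sym0 hn htr, l, n₁, n₂, hl,
      (simpleMaxEigen_Tparam_iff hl hn).mpr hM⟩

theorem statement16 :
    (∀ Q ∈ Sym0,
      (Q ∈ TsetM ↔ ∃ lam n₁ n₂ m11 m12 m22 : ℝ, 0 < lam ∧ n₁ ^ 2 + n₂ ^ 2 = 1 ∧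
        m11 + m22 = 1 ∧ MprimeCond m11 m12 m22 ∧
        Q = Tparam lam n₁ n₂ m11 m12 m22)) ∧
    (∀ lam n₁ n₂ m11 m12 m22 : ℝ, 0 < lam → n₁ ^ 2 + n₂ ^ 2 = 1 →
      m11 + m22 = 1 → MprimeCond m11 m12 m22 →
      ((∃ s : ℝ, 0 < s ∧ ∃ m : Fin 3 → ℝ, unitVec m ∧
          Tparam lam n₁ n₂ m11 m12 m22 = uniax s m) ↔
        (m11 = 1 / 2 ∧ m12 = 0 ∧ m22 = 1 / 2))) :=
  ⟨fun Q _ => statement16_general.1 Q, fun lam n₁ n₂ m11 m12 m22 hlam hn _ _ =>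
    statement16_general.2 lam n₁ n₂ m11 m12 m22 hlam hn⟩
end
end

section
/- There exist constants C > 0 and α₀ > 0 such that for every α ∈ (0, α₀) and every Q ∈ 𝒩 one has H⁴( B_α(Q) ∩ 𝒯 ) ≤ C·α⁴, where H⁴ denotes the 4-dimensional Hausdorff measure on the 5-dimensional Euclidean space Sym₀ and B_α(Q) is the open ball of radius α about Q in Sym₀. -/
/- STATEMENT 18: There exist C > 0 and α₀ > 0 such that for every α ∈ (0,α₀) and every
Q ∈ 𝒩, H⁴(B_α(Q) ∩ 𝒯) ≤ C·α⁴, where H⁴ is the 4-dimensional Hausdorff measure on the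
5-dimensional Euclidean space Sym₀ (computed in the ambient Euclidean/Frobenius space). -/

noncomputable section

open Matrix MeasureTheory Metric Set

def NsetE (s : ℝ) : Set E9 := {A | ∃ n, unitVec n ∧ toM A = uniax s n}

def TsetE : Set E9 :=
  {A | A ∈ Sym0E ∧ A ≠ 0 ∧
    ∃ (lam : ℝ) (n : Fin 3 → ℝ), SimpleMaxEigen (toM A) lam n ∧ n 2 = 0}

/-!
Only one property of `TsetE` matters: its elements are symmetric traceless matrices `A` with a
horizontal unit eigenvector `ζ = exp (iθ)`. Writing `τ` and `w` for half the trace and for the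
deviatoric part of the upper left `2 × 2` block, that block acts on `ℂ` by `ζ ↦ τ ζ + w (conj ζ)`,
so the eigenvector equation forces `w = c ζ ^ 2` with `c` real. Its third component says that
`A₂₃ - i A₁₃` is a real multiple `b ζ` of `ζ`. Hence the set lies in a linear copy of the cone of
all `(t, b ζ, c ζ ^ 2)` with `t`, `b`, `c` real.

This cone is upper `4`-regular with uniform constants. Near a point with parameters `(θ, t, b, c)`,
and at scale `r`, put `ρ = |b| + |c| + r`. In the rescaled parameter `ρ θ` the chart has a universal
Lipschitz constant, and the points of the cone at distance at most `r` have angle within a multiple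
of `r / ρ` of `θ + k π / 2` for one of finitely many integers `k`, so that they are covered by
boundedly many images of `4`-dimensional cubes of side comparable to `r`.
-/

open scoped ENNReal NNReal

section UpperRegular

variable {X Y : Type*} [MetricSpace X] [MeasurableSpace X] [BorelSpace X]
  [MetricSpace Y] [MeasurableSpace Y] [BorelSpace Y] {d : ℝ} {S : Set X} {T : Set Y}

/-- Upper Ahlfors regularity of dimension `d`: the Hausdorff measure of the part of `S` in a ball of
radius `r` is at most a constant times `r ^ d`. The centre of the ball need not lie in `S`. -/
def IsUpperRegular (d : ℝ) (S : Set X) : Prop :=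
  ∃ C : ℝ≥0, ∀ (x : X) (r : ℝ≥0), 0 < r → μH[d] (closedBall x r ∩ S) ≤ C * (r : ℝ≥0∞) ^ d

lemma isUpperRegular_of_forall_mem (hd : 0 ≤ d) {C : ℝ≥0}
    (hS : ∀ x ∈ S, ∀ r : ℝ≥0, 0 < r → μH[d] (closedBall x r ∩ S) ≤ C * (r : ℝ≥0∞) ^ d) :
    IsUpperRegular d S := by
  refine ⟨C * 2 ^ d, fun x r hr => ?_⟩
  rcases (closedBall x r ∩ S).eq_empty_or_nonempty with hempty | ⟨y, hyx, hyS⟩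
  · simp [hempty]
  have hsub : closedBall x (r : ℝ) ⊆ closedBall y ((2 * r : ℝ≥0) : ℝ) := by
    refine closedBall_subset_closedBall' ?_
    rw [dist_comm]
    push_cast
    linarith [mem_closedBall.1 hyx]
  calc μH[d] (closedBall x r ∩ S)
      ≤ μH[d] (closedBall y ((2 * r : ℝ≥0) : ℝ) ∩ S) := by gcongr
    _ ≤ C * ((2 * r : ℝ≥0) : ℝ≥0∞) ^ d := hS y hyS _ (by positivity)
    _ = (C * 2 ^ d : ℝ≥0) * (r : ℝ≥0∞) ^ d := by
        push_cast [ENNReal.coe_rpow_of_nonneg _ hd, ENNReal.mul_rpow_of_nonneg _ _ hd]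
        ring

lemma IsUpperRegular.of_lipschitzWith (hS : IsUpperRegular d S) (hd : 0 ≤ d) {f : X → Y}
    {g : Y → X} {K L : ℝ≥0} (hf : LipschitzWith K f) (hg : LipschitzWith L g)
    (hgS : MapsTo g T S) (hfg : LeftInvOn f g T) : IsUpperRegular d T := by
  obtain ⟨C, hC⟩ := hS
  refine ⟨K ^ d * (C * (L + 1) ^ d), fun y r hr => ?_⟩
  have hsub : closedBall y r ∩ T ⊆ f '' (closedBall (g y) (((L + 1) * r : ℝ≥0) : ℝ) ∩ S) := by
    rintro z ⟨hz, hzT⟩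
    exact ⟨g z, ⟨(hg.weaken le_self_add).mapsTo_closedBall y r hz, hgS hzT⟩, hfg hzT⟩
  calc μH[d] (closedBall y r ∩ T)
      ≤ K ^ d * μH[d] (closedBall (g y) (((L + 1) * r : ℝ≥0) : ℝ) ∩ S) :=
        (measure_mono hsub).trans (hf.hausdorffMeasure_image_le hd _)
    _ ≤ K ^ d * (C * (((L + 1) * r : ℝ≥0) : ℝ≥0∞) ^ d) := by
        gcongr
        exact hC _ _ (by positivity)
    _ = (K ^ d * (C * (L + 1) ^ d) : ℝ≥0) * (r : ℝ≥0∞) ^ d := by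
        push_cast [ENNReal.coe_rpow_of_nonneg _ hd, ENNReal.mul_rpow_of_nonneg _ _ hd]
        ring

lemma hausdorffMeasure_image_closedBall_pi_le {ι : Type*} [Fintype ι] {f : (ι → ℝ) → X}
    {K r : ℝ≥0} {x : ι → ℝ} (hf : LipschitzOnWith K f (closedBall x r)) :
    μH[Fintype.card ι] (f '' closedBall x r) ≤ (K * (2 * r) : ℝ≥0∞) ^ (Fintype.card ι : ℝ) := by
  have hcube : μH[Fintype.card ι] (closedBall x (r : ℝ)) = (2 * r : ℝ≥0∞) ^ Fintype.card ι := by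
    rw [hausdorffMeasure_pi_real, Real.volume_pi_closedBall x r.coe_nonneg,
      ENNReal.ofReal_pow (by positivity), ENNReal.ofReal_mul zero_le_two,
      ENNReal.ofReal_coe_nnreal, ENNReal.ofReal_ofNat]
  calc μH[Fintype.card ι] (f '' closedBall x r)
      ≤ K ^ (Fintype.card ι : ℝ) * μH[Fintype.card ι] (closedBall x (r : ℝ)) :=
        hf.hausdorffMeasure_image_le (Nat.cast_nonneg _)
    _ = (K * (2 * r) : ℝ≥0∞) ^ (Fintype.card ι : ℝ) := by
        rw [hcube, ENNReal.mul_rpow_of_nonneg _ _ (Nat.cast_nonneg _), ← ENNReal.rpow_natCast]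

end UpperRegular

section PolarCoordinates

variable (b b' θ θ' : ℝ)

lemma dist_circleMap_le :
    dist (circleMap 0 b θ) (circleMap 0 b' θ') ≤ |b - b'| + |b'| * |θ - θ'| := by
  have hradial : dist (circleMap 0 b θ) (circleMap 0 b' θ) = |b - b'| := by
    rw [dist_eq_norm, circleMap_zero, circleMap_zero, ← sub_mul, norm_mul,
      Complex.norm_exp_ofReal_mul_I, mul_one, ← Complex.ofReal_sub, Complex.norm_real,
      Real.norm_eq_abs]
  have hangular : dist (circleMap 0 b' θ) (circleMap 0 b' θ') ≤ |b'| * |θ - θ'| := by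
    simpa [Real.dist_eq] using (lipschitzWith_circleMap 0 b').dist_le_mul θ θ'
  linarith [dist_triangle (circleMap 0 b θ) (circleMap 0 b' θ) (circleMap 0 b' θ')]

lemma dist_circleMap_eq_norm :
    dist (circleMap 0 b θ) (circleMap 0 b' θ') = ‖circleMap 0 b (θ - θ') - b'‖ := by
  have hfactor : circleMap 0 b θ - circleMap 0 b' θ' =
      (circleMap 0 b (θ - θ') - b') * Complex.exp (θ' * Complex.I) := by
    rw [circleMap_zero, circleMap_zero, circleMap_zero, sub_mul, mul_assoc, ← Complex.exp_add]
    push_cast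
    ring_nf
  rw [dist_eq_norm, hfactor, norm_mul, Complex.norm_exp_ofReal_mul_I, mul_one]

lemma abs_mul_sin_sub_le_dist_circleMap :
    |b| * |Real.sin (θ - θ')| ≤ dist (circleMap 0 b θ) (circleMap 0 b' θ') := by
  rw [dist_circleMap_eq_norm, ← abs_mul]
  simpa [circleMap_zero, Complex.exp_ofReal_mul_I_im, -Complex.ofReal_sub] using
    Complex.abs_im_le_norm (circleMap 0 b (θ - θ') - b')

lemma abs_mul_cos_sub_sub_le_dist_circleMap :
    |b * Real.cos (θ - θ') - b'| ≤ dist (circleMap 0 b θ) (circleMap 0 b' θ') := by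
  rw [dist_circleMap_eq_norm]
  simpa [circleMap_zero, Complex.exp_ofReal_mul_I_re, -Complex.ofReal_sub] using
    Complex.abs_re_le_norm (circleMap 0 b (θ - θ') - b')

lemma exists_int_abs_sub_mul_pi_le (φ : ℝ) :
    ∃ k : ℤ, |φ - k * Real.pi| ≤ Real.pi / 2 * |Real.sin φ| := by
  have hπ := Real.pi_pos
  refine ⟨round (φ / Real.pi), ?_⟩
  set k := round (φ / Real.pi)
  have hfactor : φ - k * Real.pi = (φ / Real.pi - k) * Real.pi := by field_simp
  have hle : |φ - k * Real.pi| ≤ Real.pi / 2 := by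
    rw [hfactor, abs_mul, abs_of_pos hπ]
    nlinarith [abs_sub_round (φ / Real.pi)]
  have hjordan := Real.mul_abs_le_abs_sin hle
  rw [Real.sin_sub_int_mul_pi, abs_mul, abs_neg_one_zpow, one_mul] at hjordan
  calc |φ - k * Real.pi| = Real.pi / 2 * (2 / Real.pi * |φ - k * Real.pi|) := by field_simp
    _ ≤ Real.pi / 2 * |Real.sin φ| := by gcongr

end PolarCoordinates

section TwistedCone

/-- The cone of all `(t, b ζ, c ζ ^ 2)` with `t b c : ℝ` and `ζ` a unit complex number. -/
def twistedCone : Set (ℝ × ℂ × ℂ) :=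
  {x | ∃ θ t b c : ℝ, x = (t, circleMap 0 b θ, circleMap 0 c (2 * θ))}

/-- The parametrization of `twistedCone` by `(ρ θ, t, b, c)`: measuring the angle in units of
`1 / ρ` makes it Lipschitz, uniformly in `ρ`, where `|b|` and `|c|` are of order `ρ`. -/
def twistedConeChart (ρ : ℝ) (p : Fin 4 → ℝ) : ℝ × ℂ × ℂ :=
  (p 1, circleMap 0 (p 2) (p 0 / ρ), circleMap 0 (p 3) (2 * (p 0 / ρ)))

lemma lipschitzOnWith_twistedConeChart {ρ : ℝ} (hρ : 0 < ρ) (M : ℝ≥0) :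
    LipschitzOnWith (1 + 2 * M) (twistedConeChart ρ) {p | |p 2| ≤ M * ρ ∧ |p 3| ≤ M * ρ} := by
  refine LipschitzOnWith.of_dist_le_mul fun p _ q ⟨hq2, hq3⟩ => ?_
  have hcoord (i : Fin 4) : |p i - q i| ≤ dist p q := dist_le_pi_dist p q i
  have hangle : |p 0 / ρ - q 0 / ρ| ≤ dist p q / ρ := by
    rw [← sub_div, abs_div, abs_of_pos hρ]
    gcongr
    exact hcoord 0
  have hdouble : |2 * (p 0 / ρ) - 2 * (q 0 / ρ)| ≤ 2 * (dist p q / ρ) := by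
    rw [← mul_sub, abs_mul, abs_two]
    gcongr
  have hMd : 0 ≤ M * dist p q := by positivity
  rw [twistedConeChart, twistedConeChart, Prod.dist_eq, Prod.dist_eq]
  push_cast
  refine max_le ?_ (max_le ?_ ?_)
  · exact (hcoord 1).trans (by linarith)
  · calc dist (circleMap 0 (p 2) (p 0 / ρ)) (circleMap 0 (q 2) (q 0 / ρ))
        ≤ |p 2 - q 2| + |q 2| * |p 0 / ρ - q 0 / ρ| := dist_circleMap_le ..
      _ ≤ dist p q + M * ρ * (dist p q / ρ) := by gcongr; exact hcoord 2
      _ = dist p q + M * dist p q := by field_simp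
      _ ≤ (1 + 2 * M) * dist p q := by linarith
  · calc dist (circleMap 0 (p 3) (2 * (p 0 / ρ))) (circleMap 0 (q 3) (2 * (q 0 / ρ)))
        ≤ |p 3 - q 3| + |q 3| * |2 * (p 0 / ρ) - 2 * (q 0 / ρ)| := dist_circleMap_le ..
      _ ≤ dist p q + M * ρ * (2 * (dist p q / ρ)) := by gcongr; exact hcoord 3
      _ = (1 + 2 * M) * dist p q := by field_simp

lemma exists_mem_Ico_of_mem_twistedCone {x : ℝ × ℂ × ℂ} (hx : x ∈ twistedCone) (a : ℝ) :
    ∃ θ ∈ Ico a (a + 2 * Real.pi), ∃ t b c : ℝ,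
      x = (t, circleMap 0 b θ, circleMap 0 c (2 * θ)) := by
  obtain ⟨θ, t, b, c, rfl⟩ := hx
  have hperiodic : Function.Periodic
      (fun θ => (t, circleMap 0 b θ, circleMap 0 c (2 * θ))) (2 * Real.pi) := by
    intro φ
    have h := (periodic_circleMap 0 c).nat_mul 2 (2 * φ)
    simp only [Nat.cast_ofNat, ← mul_add] at h
    simp only [periodic_circleMap 0 b φ, h]
  obtain ⟨φ, hφ, heq⟩ := hperiodic.exists_mem_Ico Real.two_pi_pos θ a
  exact ⟨φ, hφ, t, b, c, heq⟩

variable {θ θ' b b' c c' r : ℝ}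

-- Of the two constraints on `θ - θ'`, the one from `b` sees it modulo `π`, the one from `c` only
-- modulo `π / 2`; `|sin 2x| ≤ 2 |sin x|` reduces both to the latter.
lemma mul_abs_sin_two_mul_sub_le
    (hb : dist (circleMap 0 b θ) (circleMap 0 b' θ') ≤ r)
    (hc : dist (circleMap 0 c (2 * θ)) (circleMap 0 c' (2 * θ')) ≤ r) :
    (|b| + |c| + r) * |Real.sin (2 * (θ - θ'))| ≤ 4 * r := by
  have hr : 0 ≤ r := dist_nonneg.trans hb
  have hbsin := (abs_mul_sin_sub_le_dist_circleMap b b' θ θ').trans hb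
  have hcsin := (abs_mul_sin_sub_le_dist_circleMap c c' (2 * θ) (2 * θ')).trans hc
  rw [← mul_sub] at hcsin
  have hdouble : |Real.sin (2 * (θ - θ'))| ≤ 2 * |Real.sin (θ - θ')| := by
    rw [Real.sin_two_mul, abs_mul, abs_mul, abs_two]
    exact mul_le_of_le_one_right (by positivity) (Real.abs_cos_le_one _)
  calc (|b| + |c| + r) * |Real.sin (2 * (θ - θ'))|
      = |b| * |Real.sin (2 * (θ - θ'))| + |c| * |Real.sin (2 * (θ - θ'))|
          + r * |Real.sin (2 * (θ - θ'))| := by ring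
    _ ≤ |b| * (2 * |Real.sin (θ - θ')|) + r + r * 1 := by
        gcongr
        exact Real.abs_sin_le_one _
    _ ≤ 4 * r := by linarith

lemma exists_int_mul_abs_sub_le
    (hb : dist (circleMap 0 b θ) (circleMap 0 b' θ') ≤ r)
    (hc : dist (circleMap 0 c (2 * θ)) (circleMap 0 c' (2 * θ')) ≤ r)
    (hθ' : θ' ∈ Ico θ (θ + 2 * Real.pi)) :
    ∃ k ∈ Finset.Icc (0 : ℤ) 4, (|b| + |c| + r) * |θ' - (θ + k * Real.pi / 2)| ≤ 4 * r := by
  have hr : 0 ≤ r := dist_nonneg.trans hb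
  have hπ := Real.pi_pos
  obtain ⟨k, hk⟩ := exists_int_abs_sub_mul_pi_le (2 * (θ' - θ))
  have hsin : |Real.sin (2 * (θ' - θ))| = |Real.sin (2 * (θ - θ'))| := by
    rw [← abs_neg, ← Real.sin_neg]
    ring_nf
  have hk_le : |2 * (θ' - θ) - k * Real.pi| ≤ Real.pi / 2 :=
    hk.trans (mul_le_of_le_one_right (by positivity) (Real.abs_sin_le_one _))
  refine ⟨k, ?_, ?_⟩
  · obtain ⟨hlow, hupp⟩ := abs_le.1 hk_le
    have hk_gt : ((-1 : ℤ) : ℝ) < k := by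
      push_cast
      nlinarith [hθ'.1]
    have hk_lt : (k : ℝ) < (5 : ℤ) := by
      push_cast
      nlinarith [hθ'.2]
    have := Int.cast_lt.1 hk_gt
    have := Int.cast_lt.1 hk_lt
    rw [Finset.mem_Icc]
    omega
  · have hhalf : |θ' - (θ + k * Real.pi / 2)| = |2 * (θ' - θ) - k * Real.pi| / 2 := by
      rw [← abs_two, ← abs_div, abs_two]
      ring_nf
    have hangle : |θ' - (θ + k * Real.pi / 2)| ≤ |Real.sin (2 * (θ - θ'))| := by
      rw [hhalf, ← hsin]
      nlinarith [Real.pi_le_four, abs_nonneg (Real.sin (2 * (θ' - θ)))]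
    exact (mul_le_mul_of_nonneg_left hangle (by positivity)).trans
      (mul_abs_sin_two_mul_sub_le hb hc)

lemma abs_sub_mul_cos_le {φ : ℝ} (hb : dist (circleMap 0 b θ) (circleMap 0 b' θ') ≤ r) :
    |b' - b * Real.cos φ| ≤ r + |b| * |θ' - (θ + φ)| := by
  have hcos : |Real.cos (θ - θ') - Real.cos φ| ≤ |θ' - (θ + φ)| := by
    rw [← Real.cos_neg (θ - θ')]
    refine (Real.abs_cos_sub_cos_le _ _).trans_eq ?_
    ring_nf
  calc |b' - b * Real.cos φ|
      = |-(b * Real.cos (θ - θ') - b') + b * (Real.cos (θ - θ') - Real.cos φ)| := by ring_nf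
    _ ≤ |b * Real.cos (θ - θ') - b'| + |b| * |Real.cos (θ - θ') - Real.cos φ| := by
        rw [← abs_neg (b * Real.cos (θ - θ') - b'), ← abs_mul]
        exact abs_add_le _ _
    _ ≤ r + |b| * |θ' - (θ + φ)| := by
        gcongr
        exact (abs_mul_cos_sub_sub_le_dist_circleMap b b' θ θ').trans hb

/-- The parameters, in `twistedConeChart ρ`, of the point over the angle `θ + k π / 2` closest to
the one with parameters `(θ, t, b, c)`. -/
def chartCenter (ρ θ t b c : ℝ) (k : ℤ) : Fin 4 → ℝ :=
  ![ρ * (θ + k * Real.pi / 2), t, b * Real.cos (k * Real.pi / 2), c * Real.cos (k * Real.pi)]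

lemma closedBall_inter_twistedCone_subset (θ t b c : ℝ) (hr : 0 < r) :
    closedBall (t, circleMap 0 b θ, circleMap 0 c (2 * θ)) r ∩ twistedCone ⊆
      ⋃ k ∈ Finset.Icc (0 : ℤ) 4, twistedConeChart (|b| + |c| + r) ''
        closedBall (chartCenter (|b| + |c| + r) θ t b c k) (9 * r) := by
  rintro y ⟨hy, hyS⟩
  obtain ⟨θ', hθ', t', b', c', rfl⟩ := exists_mem_Ico_of_mem_twistedCone hyS θ
  rw [mem_closedBall', Prod.dist_eq, Prod.dist_eq, max_le_iff, max_le_iff] at hy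
  obtain ⟨ht, hb, hc⟩ := hy
  obtain ⟨k, hk, hangle⟩ := exists_int_mul_abs_sub_le hb hc hθ'
  set ρ := |b| + |c| + r
  have hρ0 : 0 < ρ := by positivity
  have hbθ : |b| * |θ' - (θ + k * Real.pi / 2)| ≤ 4 * r :=
    le_trans (by gcongr; linarith [abs_nonneg c]) hangle
  have hcθ : |c| * |θ' - (θ + k * Real.pi / 2)| ≤ 4 * r :=
    le_trans (by gcongr; linarith [abs_nonneg b]) hangle
  have hdouble : |2 * θ' - (2 * θ + k * Real.pi)| = 2 * |θ' - (θ + k * Real.pi / 2)| := by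
    rw [← abs_two, ← abs_mul, abs_two]
    ring_nf
  have hb' := abs_sub_mul_cos_le (φ := k * Real.pi / 2) hb
  have hc' := abs_sub_mul_cos_le (φ := k * Real.pi) hc
  rw [hdouble] at hc'
  refine mem_biUnion hk ⟨![ρ * θ', t', b', c'], ?_, ?_⟩
  · rw [mem_closedBall, dist_pi_le_iff (by positivity)]
    have h0 : |ρ * θ' - ρ * (θ + k * Real.pi / 2)| ≤ 9 * r := by
      rw [← mul_sub, abs_mul, abs_of_pos hρ0]
      linarith
    have h1 : |t' - t| ≤ 9 * r := by
      rw [abs_sub_comm]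
      exact ht.trans (by linarith)
    have h2 : |b' - b * Real.cos (k * Real.pi / 2)| ≤ 9 * r := by linarith
    have h3 : |c' - c * Real.cos (k * Real.pi)| ≤ 9 * r := by linarith
    simpa [Fin.forall_fin_succ, chartCenter, Real.dist_eq] using ⟨h0, h1, h2, h3⟩
  · simp [twistedConeChart, hρ0.ne']

lemma closedBall_chartCenter_subset (θ t b c : ℝ) (k : ℤ) :
    closedBall (chartCenter (|b| + |c| + r) θ t b c k) (9 * r) ⊆
      {p | |p 2| ≤ 9 * (|b| + |c| + r) ∧ |p 3| ≤ 9 * (|b| + |c| + r)} := by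
  intro p hp
  have hcoord (i : Fin 4) : |p i - chartCenter (|b| + |c| + r) θ t b c k i| ≤ 9 * r :=
    (dist_le_pi_dist p _ i).trans hp
  have hbound {x y φ : ℝ} (h : |x - y * Real.cos φ| ≤ 9 * r) : |x| ≤ |y| + 9 * r := by
    have hy : |y * Real.cos φ| ≤ |y| := by
      rw [abs_mul]
      exact mul_le_of_le_one_right (abs_nonneg y) (Real.abs_cos_le_one φ)
    linarith [abs_sub_abs_le_abs_sub x (y * Real.cos φ)]
  have h2 : |p 2| ≤ |b| + 9 * r := hbound (hcoord 2)
  have h3 : |p 3| ≤ |c| + 9 * r := hbound (hcoord 3)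
  constructor <;> linarith [abs_nonneg b, abs_nonneg c]

theorem isUpperRegular_twistedCone : IsUpperRegular 4 twistedCone := by
  refine isUpperRegular_of_forall_mem (C := 5 * (19 * (2 * 9)) ^ (4 : ℝ)) (by norm_num) ?_
  rintro _ ⟨θ, t, b, c, rfl⟩ r hr
  set ρ : ℝ := |b| + |c| + r
  have hρ : 0 < ρ := by positivity
  set cube : ℤ → Set (Fin 4 → ℝ) := fun k =>
    closedBall (chartCenter ρ θ t b c k) ((9 * r : ℝ≥0) : ℝ)
  have hcube (k : ℤ) :
      μH[4] (twistedConeChart ρ '' cube k) ≤ (19 * (2 * 9)) ^ (4 : ℝ) * (r : ℝ≥0∞) ^ (4 : ℝ) := by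
    have hlip : LipschitzOnWith 19 (twistedConeChart ρ) (cube k) :=
      ((lipschitzOnWith_twistedConeChart hρ 9).weaken (by norm_num)).mono
        (closedBall_chartCenter_subset θ t b c k)
    have hmeasure := hausdorffMeasure_image_closedBall_pi_le hlip
    simp only [Fintype.card_fin, Nat.cast_ofNat] at hmeasure
    rw [← ENNReal.mul_rpow_of_nonneg _ _ (by norm_num)]
    simpa [cube, mul_assoc] using hmeasure
  calc μH[4] (closedBall (t, circleMap 0 b θ, circleMap 0 c (2 * θ)) r ∩ twistedCone)
      ≤ μH[4] (⋃ k ∈ Finset.Icc (0 : ℤ) 4, twistedConeChart ρ '' cube k) :=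
        measure_mono (closedBall_inter_twistedCone_subset θ t b c hr)
    _ ≤ ∑ k ∈ Finset.Icc (0 : ℤ) 4, μH[4] (twistedConeChart ρ '' cube k) :=
        measure_biUnion_finset_le _ _
    _ ≤ ∑ k ∈ Finset.Icc (0 : ℤ) 4, (19 * (2 * 9)) ^ (4 : ℝ) * (r : ℝ≥0∞) ^ (4 : ℝ) :=
        Finset.sum_le_sum fun k _ => hcube k
    _ = (5 * (19 * (2 * 9)) ^ (4 : ℝ) : ℝ≥0) * (r : ℝ≥0∞) ^ (4 : ℝ) := by
        simp [mul_assoc]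

end TwistedCone

section MatrixCoordinates

/-- Linear coordinates `(t, z, w)` on symmetric traceless `3 × 3` matrices adapted to the rotations
about the third axis: a rotation by `φ` multiplies `z` by `exp (iφ)` and `w` by `exp (2iφ)`. -/
def coords : E9 →ₗ[ℝ] ℝ × ℂ × ℂ where
  toFun A := ((A (0, 0) + A (1, 1)) / 2, ⟨A (1, 2), -A (0, 2)⟩,
    ⟨(A (0, 0) - A (1, 1)) / 2, A (0, 1)⟩)
  map_add' A B := by
    refine Prod.ext ?_ (Prod.ext (Complex.ext ?_ ?_) (Complex.ext ?_ ?_)) <;> simp <;> ring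
  map_smul' a A := by
    refine Prod.ext ?_ (Prod.ext (Complex.ext ?_ ?_) (Complex.ext ?_ ?_)) <;> simp <;> ring

/-- The symmetric traceless matrix with given `coords`. -/
def ofCoords : ℝ × ℂ × ℂ →ₗ[ℝ] E9 where
  toFun x := WithLp.toLp 2 fun ij =>
    (!![x.1 + x.2.2.re, x.2.2.im, -x.2.1.im;
        x.2.2.im, x.1 - x.2.2.re, x.2.1.re;
        -x.2.1.im, x.2.1.re, -2 * x.1] : Mat3) ij.1 ij.2
  map_add' x y := by
    ext ⟨i, j⟩
    fin_cases i <;> fin_cases j <;> simp <;> ring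
  map_smul' a x := by
    ext ⟨i, j⟩
    fin_cases i <;> fin_cases j <;> simp <;> ring

lemma ofCoords_coords {A : E9} (hA : A ∈ Sym0E) : ofCoords (coords A) = A := by
  obtain ⟨hsym, htrace⟩ := hA
  have h10 : A (1, 0) = A (0, 1) := hsym.apply 0 1
  have h20 : A (2, 0) = A (0, 2) := hsym.apply 0 2
  have h21 : A (2, 1) = A (1, 2) := hsym.apply 1 2
  have h22 : A (0, 0) + A (1, 1) + A (2, 2) = 0 := by
    simpa [toM, Matrix.trace, Fin.sum_univ_three] using htrace
  ext ⟨i, j⟩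
  fin_cases i <;> fin_cases j <;> simp [ofCoords, coords, h10, h20, h21] <;> linarith

lemma exists_cos_sin_eq {x y : ℝ} (h : x ^ 2 + y ^ 2 = 1) :
    ∃ θ : ℝ, Real.cos θ = x ∧ Real.sin θ = y := by
  have hnorm : ‖(⟨x, y⟩ : ℂ)‖ = 1 := by
    rw [Complex.norm_eq_sqrt_sq_add_sq, h, Real.sqrt_one]
  exact ⟨Complex.arg ⟨x, y⟩, by simpa [hnorm] using Complex.norm_mul_cos_arg ⟨x, y⟩,
    by simpa [hnorm] using Complex.norm_mul_sin_arg ⟨x, y⟩⟩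

lemma coords_mem_twistedCone {A : E9} (hsym : (toM A).IsSymm) {lam : ℝ} {n : Fin 3 → ℝ}
    (hn : unitVec n) (heig : IsEigen (toM A) lam n) (hn2 : n 2 = 0) :
    coords A ∈ twistedCone := by
  have hunit : n 0 ^ 2 + n 1 ^ 2 = 1 := by
    simpa [unitVec, Fin.sum_univ_three, hn2] using hn
  obtain ⟨θ, hcos, hsin⟩ := exists_cos_sin_eq hunit
  have h10 : A (1, 0) = A (0, 1) := hsym.apply 0 1
  have h20 : A (2, 0) = A (0, 2) := hsym.apply 0 2
  have h21 : A (2, 1) = A (1, 2) := hsym.apply 1 2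
  have hrow (i : Fin 3) : A (i, 0) * n 0 + A (i, 1) * n 1 = lam * n i := by
    simpa [toM, Matrix.mulVec, dotProduct, Fin.sum_univ_three, hn2] using congrFun heig i
  have hrow0 := hrow 0
  have hrow1 := hrow 1
  have hrow2 := hrow 2
  rw [h10] at hrow1
  rw [h20, h21, hn2, mul_zero] at hrow2
  refine ⟨θ, (A (0, 0) + A (1, 1)) / 2, A (1, 2) * n 0 - A (0, 2) * n 1,
    lam - (A (0, 0) + A (1, 1)) / 2, ?_⟩
  refine Prod.ext rfl (Prod.ext (Complex.ext ?_ ?_) (Complex.ext ?_ ?_)) <;>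
    simp only [coords, LinearMap.coe_mk, AddHom.coe_mk, circleMap_zero,
    Complex.re_ofReal_mul, Complex.im_ofReal_mul, Complex.exp_ofReal_mul_I_re,
    Complex.exp_ofReal_mul_I_im, Real.cos_two_mul', Real.sin_two_mul, hcos, hsin]
  · linear_combination n 1 * hrow2 - A (1, 2) * hunit
  · linear_combination -n 0 * hrow2 + A (0, 2) * hunit
  · linear_combination n 0 * hrow0 - n 1 * hrow1 - (A (0, 0) - A (1, 1)) / 2 * hunit
  · linear_combination n 1 * hrow0 + n 0 * hrow1 - A (0, 1) * hunit

end MatrixCoordinates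

/-- The symmetric traceless matrices with a unit eigenvector orthogonal to the third axis. Unlike in
`TsetE`, the eigenvalue need be neither maximal nor simple. -/
def HsetE : Set E9 :=
  {A | A ∈ Sym0E ∧ ∃ (lam : ℝ) (n : Fin 3 → ℝ), unitVec n ∧ IsEigen (toM A) lam n ∧ n 2 = 0}

lemma TsetE_subset_HsetE : TsetE ⊆ HsetE := by
  rintro A ⟨hA, -, lam, n, ⟨⟨hn, heig, -⟩, -⟩, hn2⟩
  exact ⟨hA, lam, n, hn, heig, hn2⟩

theorem isUpperRegular_HsetE : IsUpperRegular 4 HsetE := by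
  refine isUpperRegular_twistedCone.of_lipschitzWith (by norm_num)
    ofCoords.toContinuousLinearMap.lipschitz coords.toContinuousLinearMap.lipschitz ?_ ?_
  · rintro A ⟨⟨hsym, -⟩, lam, n, hn, heig, hn2⟩
    exact coords_mem_twistedCone hsym hn heig hn2
  · exact fun A hA => ofCoords_coords hA.1

theorem statement18_general :
    ∃ C > (0 : ℝ), ∀ α : ℝ, 0 < α → ∀ Q : E9,
      μH[4] (ball Q α ∩ HsetE) ≤ ENNReal.ofReal (C * α ^ 4) := by
  obtain ⟨C, hC⟩ := isUpperRegular_HsetE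
  refine ⟨C + 1, by positivity, fun α hα Q => ?_⟩
  lift α to ℝ≥0 using hα.le
  refine (measure_mono (inter_subset_inter_left _ ball_subset_closedBall)).trans
    ((hC Q α hα).trans ?_)
  rw [ENNReal.ofReal_mul (by positivity), ENNReal.ofReal_pow α.coe_nonneg,
    ENNReal.ofReal_coe_nnreal, ← ENNReal.rpow_natCast, Nat.cast_ofNat]
  gcongr
  rw [← ENNReal.ofReal_coe_nnreal]
  exact ENNReal.ofReal_le_ofReal (by linarith)

theorem statement18 (sS : ℝ) (hsS : 0 < sS) :
    ∃ Cc > (0 : ℝ), ∃ α₀ > (0 : ℝ), ∀ α : ℝ, 0 < α → α < α₀ →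
      ∀ Q ∈ NsetE sS, μH[4] (ball Q α ∩ TsetE) ≤ ENNReal.ofReal (Cc * α ^ 4) := by
  obtain ⟨C, hC, hbound⟩ := statement18_general
  exact ⟨C, hC, 1, one_pos, fun α hα _ Q _ =>
    (measure_mono (inter_subset_inter_right _ TsetE_subset_HsetE)).trans (hbound α hα Q)⟩
end
end

section
/- Let 𝒞 = { Q ∈ Sym₀ : λ₁(Q) = λ₂(Q) }, where λ₁(Q) ≥ λ₂(Q) ≥ λ₃(Q) are the eigenvalues of Q in decreasing order (i.e. the two largest eigenvalues of Q coincide). Then the map Φ : ℝP² × ℝ → Sym₀ defined by Φ([p], t) = e^t·( I − 3·p⊗p ), for p ∈ ℝ³ a unit vector representing the line [p] ∈ ℝP², is a homeomorphism onto 𝒞 ∖ {0}. In particular 𝒞 ∖ {0} is homeomorphic to ℝP² × ℝ. -/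
/- STATEMENT 19: Let 𝒞 = {Q ∈ Sym₀ : λ₁(Q) = λ₂(Q)} (two largest eigenvalues equal).
Then Φ : ℝP² × ℝ → Sym₀, Φ([p],t) = e^t(I − 3p⊗p) (p a unit representative), is a
homeomorphism onto 𝒞 ∖ {0}; in particular 𝒞 ∖ {0} ≅ ℝP² × ℝ.
ℝP² is the projectivization of ℝ³ with the quotient topology. -/

noncomputable section

open Matrix Set

abbrev V3 : Type := EuclideanSpace ℝ (Fin 3)
def toE (Q : Mat3) : E9 := (WithLp.equiv 2 _).symm (fun p => Q p.1 p.2)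

/-- The two largest eigenvalues of (the symmetric matrix) Q coincide: the largest
eigenvalue admits two orthonormal eigenvectors. -/
def TwoLargestEqual (Q : Mat3) : Prop :=
  ∃ (lam : ℝ) (v w : Fin 3 → ℝ), unitVec v ∧ unitVec w ∧ (∑ i, v i * w i) = 0 ∧
    IsEigen Q lam v ∧ IsEigen Q lam w ∧
    ∀ (μ : ℝ) (u : Fin 3 → ℝ), u ≠ 0 → IsEigen Q μ u → μ ≤ lam

/-- The biaxial cone 𝒞 ⊂ Sym₀. -/
def CsetE : Set E9 := {A | A ∈ Sym0E ∧ TwoLargestEqual (toM A)}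

/-- ℝP² with the quotient topology. -/
noncomputable instance : TopologicalSpace (Projectivization ℝ V3) :=
  instTopologicalSpaceQuotient

/-!
If `v, w` are orthonormal eigenvectors of a symmetric traceless matrix `Q` for its top
eigenvalue `s`, then `Q - s • 1` kills `v` and `w`, so it is the multiple of `p ⊗ p`, `p = v ⨯₃ w`,
with trace `-3s`. Hence `Q = s • (1 - 3 p ⊗ p)`, and `s ≥ 0` because the third eigenvalue `-2s` is
at most `s`. Thus `𝒞` is the cone over the image of
`[p] ↦ 1 - 3 p ⊗ p`. This map is continuous and injective on the compact space `ℝP²` and takes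
values in a sphere centred at the origin, so polar coordinates turn it into an embedding of
`ℝP² × ℝ`.
-/

open Metric Topology
open scoped LinearAlgebra.Projectivization

theorem isEmbedding_exp_smul {X E : Type*} [TopologicalSpace X] [NormedAddCommGroup E]
    [NormedSpace ℝ E] {f : X → E} (hf : IsEmbedding f) {r : ℝ} (hr : 0 < r)
    (hnorm : ∀ x, ‖f x‖ = r) :
    IsEmbedding fun z : X × ℝ => Real.exp z.2 • f z.1 := by
  have hsphere : IsEmbedding (Set.codRestrict f (sphere 0 r) (by simpa using hnorm)) :=
    hf.codRestrict _ _
  have hexp : IsEmbedding Real.expOrderIso := Real.expOrderIso.toHomeomorph.isEmbedding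
  exact IsEmbedding.subtypeVal.comp
    ((homeomorphSphereProd E r hr).symm.isEmbedding.comp (hsphere.prodMap hexp))

section ProjectiveSpace

variable {𝕜 V : Type*} [RCLike 𝕜] [NormedAddCommGroup V] [NormedSpace 𝕜 V]

theorem exists_norm_eq_one_mk_eq (x : ℙ 𝕜 V) :
    ∃ (p : V) (hp : p ≠ 0), ‖p‖ = 1 ∧ Projectivization.mk 𝕜 p hp = x := by
  induction x using Projectivization.ind with
  | h v hv =>
    have hnorm : ‖(‖v‖⁻¹ : 𝕜) • v‖ = 1 := norm_smul_inv_norm hv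
    have hne : (‖v‖⁻¹ : 𝕜) • v ≠ 0 := norm_ne_zero_iff.1 (by simp [hnorm])
    exact ⟨_, hne, hnorm, (Projectivization.mk_eq_mk_iff' ..).2 ⟨_, rfl⟩⟩

theorem compactSpace_of_continuous_mk' [ProperSpace V] [TopologicalSpace (ℙ 𝕜 V)]
    (hmk : Continuous (Projectivization.mk' 𝕜 : {v : V // v ≠ 0} → ℙ 𝕜 V)) :
    CompactSpace (ℙ 𝕜 V) := by
  let toNonzero (p : sphere (0 : V) 1) : {v : V // v ≠ 0} := ⟨p, ne_zero_of_mem_unit_sphere p⟩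
  have hcont : Continuous (Projectivization.mk' 𝕜 ∘ toNonzero) := hmk.comp (by fun_prop)
  have hsurj : Function.Surjective (Projectivization.mk' 𝕜 ∘ toNonzero) := fun x => by
    obtain ⟨p, _, hnorm, rfl⟩ := exists_norm_eq_one_mk_eq x
    exact ⟨⟨p, by simpa using hnorm⟩, rfl⟩
  exact hsurj.compactSpace hcont

end ProjectiveSpace

section RankOne

variable {n R : Type*} [CommRing R]

theorem isSymm_smul_one_sub_smul_vecMulVec [DecidableEq n] (s c : R) (p : n → R) :
    (s • (1 - c • vecMulVec p p)).IsSymm := by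
  simp [IsSymm, transpose_vecMulVec]

variable [Fintype n]

theorem eq_dotProduct_smul_of_vecMulVec_self_eq {p q : n → R} (hp : p ⬝ᵥ p = 1)
    (h : vecMulVec p p = vecMulVec q q) : p = (q ⬝ᵥ p) • q := by
  simpa [vecMulVec_mulVec, hp] using congr($h *ᵥ p)

theorem vecMulVec_eq_smul_self_of_isSymm {p q : n → R} (hp : p ⬝ᵥ p = 1)
    (h : (vecMulVec q p).IsSymm) : vecMulVec q p = (q ⬝ᵥ p) • vecMulVec p p := by
  have hcomm : vecMulVec p q = vecMulVec q p := by rw [← h.eq, transpose_vecMulVec]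
  have hq : (q ⬝ᵥ p) • p = q := by
    simpa [vecMulVec_mulVec, hp] using congr($hcomm *ᵥ p)
  rw [← smul_vecMulVec, hq]

theorem isIdempotentElem_vecMulVec_self {p : n → R} (hp : p ⬝ᵥ p = 1) :
    IsIdempotentElem (vecMulVec p p) := by
  rw [IsIdempotentElem, vecMulVec_mul_vecMulVec, hp, one_smul]

variable [DecidableEq n]

theorem smul_one_sub_smul_vecMulVec_mulVec (s c : R) (p u : n → R) :
    (s • (1 - c • vecMulVec p p)) *ᵥ u = s • (u - (c * (p ⬝ᵥ u)) • p) := by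
  simp [smul_mulVec, sub_mulVec, vecMulVec_mulVec, smul_smul]

theorem eigenvalue_le_of_smul_one_sub_smul_vecMulVec {s c μ : ℝ} (hs : 0 ≤ s) (hc : 0 ≤ c)
    {p u : n → ℝ} (hu : u ≠ 0) (h : (s • (1 - c • vecMulVec p p)) *ᵥ u = μ • u) : μ ≤ s := by
  have huu : 0 < u ⬝ᵥ u := by simpa using dotProduct_star_self_pos_iff.2 hu
  have hquad : s * (u ⬝ᵥ u - c * (p ⬝ᵥ u) ^ 2) = μ * (u ⬝ᵥ u) := by
    rw [smul_one_sub_smul_vecMulVec_mulVec] at h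
    have := congr(u ⬝ᵥ $h)
    simp only [dotProduct_smul, dotProduct_sub, smul_eq_mul, dotProduct_comm u p] at this
    linear_combination this
  have hdrop : 0 ≤ s * (c * (p ⬝ᵥ u) ^ 2) := by positivity
  exact le_of_mul_le_mul_right (by linarith) huu

end RankOne

section OrthonormalPair

variable {R : Type*} [CommRing R] {v w : Fin 3 → R}

theorem cross_dotProduct_self (hv : v ⬝ᵥ v = 1) (hw : w ⬝ᵥ w = 1) (hvw : v ⬝ᵥ w = 0) :
    (v ⨯₃ w) ⬝ᵥ (v ⨯₃ w) = 1 := by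
  rw [cross_dot_cross, hv, hw, hvw, zero_mul, one_mul, sub_zero]

theorem vecMulVec_add_vecMulVec_add_vecMulVec_cross
    (hv : v ⬝ᵥ v = 1) (hw : w ⬝ᵥ w = 1) (hvw : v ⬝ᵥ w = 0) :
    vecMulVec v v + vecMulVec w w + vecMulVec (v ⨯₃ w) (v ⨯₃ w) = 1 := by
  let U : Matrix (Fin 3) (Fin 3) R := of ![v, w, v ⨯₃ w]
  have hrows : U * Uᵀ = 1 := by
    ext i j
    change ![v, w, v ⨯₃ w] i ⬝ᵥ ![v, w, v ⨯₃ w] j = _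
    fin_cases i <;> fin_cases j <;>
      simp [hv, hw, hvw, dotProduct_comm w v, cross_dotProduct_self hv hw hvw,
        dotProduct_comm (v ⨯₃ w)]
  rw [← mul_eq_one_comm.1 hrows]
  ext i j
  simp [U, mul_apply, Fin.sum_univ_three, vecMulVec_apply]

theorem eq_trace_smul_vecMulVec_cross {M : Matrix (Fin 3) (Fin 3) R} (hM : M.IsSymm)
    (hv : v ⬝ᵥ v = 1) (hw : w ⬝ᵥ w = 1) (hvw : v ⬝ᵥ w = 0)
    (hMv : M *ᵥ v = 0) (hMw : M *ᵥ w = 0) :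
    M = M.trace • vecMulVec (v ⨯₃ w) (v ⨯₃ w) := by
  have hrank : M = vecMulVec (M *ᵥ (v ⨯₃ w)) (v ⨯₃ w) := by
    calc M = M * (vecMulVec v v + vecMulVec w w + vecMulVec (v ⨯₃ w) (v ⨯₃ w)) := by
          rw [vecMulVec_add_vecMulVec_add_vecMulVec_cross hv hw hvw, mul_one]
      _ = vecMulVec (M *ᵥ (v ⨯₃ w)) (v ⨯₃ w) := by simp [mul_add, mul_vecMulVec, hMv, hMw]
  have hsymm : (vecMulVec (M *ᵥ (v ⨯₃ w)) (v ⨯₃ w)).IsSymm := hrank ▸ hM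
  have htrace : M.trace = (M *ᵥ (v ⨯₃ w)) ⬝ᵥ (v ⨯₃ w) := by
    conv_lhs => rw [hrank, trace_vecMulVec]
  rw [htrace, ← vecMulVec_eq_smul_self_of_isSymm (cross_dotProduct_self hv hw hvw) hsymm]
  exact hrank

theorem eq_smul_one_sub_smul_vecMulVec_cross {Q : Matrix (Fin 3) (Fin 3) R} {s : R}
    (hQ : Q.IsSymm) (htr : Q.trace = 0)
    (hv : v ⬝ᵥ v = 1) (hw : w ⬝ᵥ w = 1) (hvw : v ⬝ᵥ w = 0)
    (hQv : Q *ᵥ v = s • v) (hQw : Q *ᵥ w = s • w) :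
    Q = s • (1 - (3 : R) • vecMulVec (v ⨯₃ w) (v ⨯₃ w)) := by
  have hshift : Q - s • 1 = (Q - s • 1).trace • vecMulVec (v ⨯₃ w) (v ⨯₃ w) :=
    eq_trace_smul_vecMulVec_cross (hQ.sub (isSymm_one.smul s)) hv hw hvw
      (by simp [sub_mulVec, smul_mulVec, hQv]) (by simp [sub_mulVec, smul_mulVec, hQw])
  have htrace : (Q - s • 1).trace = -(s * 3) := by simp [htr]
  rw [htrace, sub_eq_iff_eq_add] at hshift
  rw [hshift, smul_sub, smul_smul, neg_smul]
  abel

end OrthonormalPair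

section LineProjection

variable {n : Type*} [Fintype n]

theorem dotProduct_self_eq_norm_sq (p : EuclideanSpace ℝ n) : p.ofLp ⬝ᵥ p.ofLp = ‖p‖ ^ 2 := by
  simp [dotProduct, EuclideanSpace.real_norm_sq_eq, ← sq]

theorem dotProduct_self_eq_one {p : EuclideanSpace ℝ n} (hp : ‖p‖ = 1) :
    p.ofLp ⬝ᵥ p.ofLp = 1 := by
  rw [dotProduct_self_eq_norm_sq, hp, one_pow]

/-- The matrix of the orthogonal projection onto a line, `p ⊗ p / ‖p‖²` for any nonzero `p` on
the line, so that no unit representative has to be chosen. -/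
def lineProjection : ℙ ℝ (EuclideanSpace ℝ n) → Matrix n n ℝ :=
  Projectivization.lift (fun p => (‖p.1‖ ^ 2)⁻¹ • vecMulVec p.1.ofLp p.1.ofLp) <| by
    rintro ⟨_, ha⟩ ⟨b, hb⟩ t rfl
    have ht : t ≠ 0 := (smul_ne_zero_iff.1 ha).1
    have hb' : ‖b‖ ≠ 0 := norm_ne_zero_iff.2 hb
    ext i j
    simp only [norm_smul, Real.norm_eq_abs, mul_pow, sq_abs, WithLp.ofLp_smul,
      Matrix.smul_apply, vecMulVec_apply, Pi.smul_apply, smul_eq_mul]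
    field_simp

theorem lineProjection_mk {p : EuclideanSpace ℝ n} (hp : p ≠ 0) (hnorm : ‖p‖ = 1) :
    lineProjection (Projectivization.mk ℝ p hp) = vecMulVec p.ofLp p.ofLp := by
  simp [lineProjection, hnorm]

theorem lineProjection_injective :
    Function.Injective (lineProjection : ℙ ℝ (EuclideanSpace ℝ n) → Matrix n n ℝ) := by
  intro x y h
  obtain ⟨p, hp, hp1, rfl⟩ := exists_norm_eq_one_mk_eq x
  obtain ⟨q, hq, hq1, rfl⟩ := exists_norm_eq_one_mk_eq y
  rw [lineProjection_mk hp hp1, lineProjection_mk hq hq1] at h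
  refine (Projectivization.mk_eq_mk_iff' ..).2 ⟨q.ofLp ⬝ᵥ p.ofLp, ?_⟩
  exact WithLp.ofLp_injective 2
    (eq_dotProduct_smul_of_vecMulVec_self_eq (dotProduct_self_eq_one hp1) h).symm

theorem continuous_lineProjection [TopologicalSpace (ℙ ℝ (EuclideanSpace ℝ n))]
    (hmk : IsQuotientMap
      (Projectivization.mk' ℝ : {v : EuclideanSpace ℝ n // v ≠ 0} → ℙ ℝ (EuclideanSpace ℝ n))) :
    Continuous (lineProjection (n := n)) := by
  have hne (p : {v : EuclideanSpace ℝ n // v ≠ 0}) : ‖p.1‖ ^ 2 ≠ 0 :=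
    pow_ne_zero 2 (norm_ne_zero_iff.2 p.2)
  have hrep : Continuous fun p : {v : EuclideanSpace ℝ n // v ≠ 0} =>
      (‖p.1‖ ^ 2)⁻¹ • vecMulVec p.1.ofLp p.1.ofLp := by
    fun_prop (disch := exact hne _)
  exact hmk.continuous_iff.2 hrep

end LineProjection

section Cone

theorem isQuotientMap_mk' : IsQuotientMap (Projectivization.mk' ℝ : {v : V3 // v ≠ 0} → ℙ ℝ V3) :=
  isQuotientMap_quotient_mk'

instance : CompactSpace (ℙ ℝ V3) :=
  compactSpace_of_continuous_mk' isQuotientMap_mk'.continuous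

theorem toE_injective : Function.Injective toE :=
  Function.LeftInverse.injective (g := toM) fun _ => rfl

theorem continuous_toE : Continuous toE :=
  (PiLp.continuous_toLp 2 _).comp (by fun_prop)

theorem norm_sq_toE (Q : Mat3) : ‖toE Q‖ ^ 2 = (Q * Qᵀ).trace := by
  rw [EuclideanSpace.real_norm_sq_eq, Fintype.sum_prod_type]
  simp [toE, trace, mul_apply, sq]

theorem unitVec_iff_dotProduct_self_eq_one {v : Fin 3 → ℝ} : unitVec v ↔ v ⬝ᵥ v = 1 := by
  simp [unitVec, dotProduct, sq]

theorem trace_one_sub_three_smul_vecMulVec {p : Fin 3 → ℝ} (hp : p ⬝ᵥ p = 1) :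
    (1 - (3 : ℝ) • vecMulVec p p).trace = 0 := by
  simp [hp]

theorem norm_toE_one_sub_three_smul_vecMulVec {p : Fin 3 → ℝ} (hp : p ⬝ᵥ p = 1) :
    ‖toE (1 - (3 : ℝ) • vecMulVec p p)‖ = √6 := by
  have hsq : (1 - (3 : ℝ) • vecMulVec p p) * (1 - (3 : ℝ) • vecMulVec p p)ᵀ =
      1 + (3 : ℝ) • vecMulVec p p := by
    simp only [transpose_sub, transpose_one, transpose_smul, transpose_vecMulVec, sub_mul, mul_sub,
      one_mul, mul_one, smul_mul_smul, (isIdempotentElem_vecMulVec_self hp).eq]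
    module
  rw [← Real.sqrt_sq (norm_nonneg _), norm_sq_toE, hsq]
  norm_num [hp]

theorem exists_orthonormal_pair_orthogonal {p : V3} (hp : p ≠ 0) :
    ∃ v w : Fin 3 → ℝ, v ⬝ᵥ v = 1 ∧ w ⬝ᵥ w = 1 ∧ v ⬝ᵥ w = 0 ∧
      p.ofLp ⬝ᵥ v = 0 ∧ p.ofLp ⬝ᵥ w = 0 := by
  have : Fact (Module.finrank ℝ V3 = 2 + 1) := ⟨by simp⟩
  let e := OrthonormalBasis.fromOrthogonalSpanSingleton (𝕜 := ℝ) 2 hp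
  have horth (i : Fin 2) : inner ℝ (e i : V3) p = 0 :=
    Submodule.mem_orthogonal_singleton_iff_inner_left.1 (e i).2
  have h01 : inner ℝ (e 1 : V3) (e 0) = 0 := e.inner_eq_zero (by decide)
  exact ⟨(e 0).1.ofLp, (e 1).1.ofLp, dotProduct_self_eq_one (e.norm_eq_one 0),
    dotProduct_self_eq_one (e.norm_eq_one 1), h01, horth 0, horth 1⟩

theorem twoLargestEqual_smul_one_sub_three_smul_vecMulVec {s : ℝ} (hs : 0 ≤ s) {p : V3}
    (hp : p ≠ 0) : TwoLargestEqual (s • (1 - (3 : ℝ) • vecMulVec p.ofLp p.ofLp)) := by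
  obtain ⟨v, w, hv, hw, hvw, hpv, hpw⟩ := exists_orthonormal_pair_orthogonal hp
  refine ⟨s, v, w, unitVec_iff_dotProduct_self_eq_one.2 hv,
    unitVec_iff_dotProduct_self_eq_one.2 hw, hvw, ?_, ?_, fun μ u hu h =>
      eigenvalue_le_of_smul_one_sub_smul_vecMulVec hs zero_le_three hu h⟩
  · simp [IsEigen, smul_one_sub_smul_vecMulVec_mulVec, hpv]
  · simp [IsEigen, smul_one_sub_smul_vecMulVec_mulVec, hpw]

theorem exists_eq_smul_one_sub_three_smul_vecMulVec {Q : Mat3} (hQ : Q.IsSymm)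
    (htr : Q.trace = 0) (h : TwoLargestEqual Q) :
    ∃ s : ℝ, 0 ≤ s ∧ ∃ p : V3, ‖p‖ = 1 ∧
      Q = s • (1 - (3 : ℝ) • vecMulVec p.ofLp p.ofLp) := by
  obtain ⟨s, v, w, hv, hw, hvw, hQv, hQw, hmax⟩ := h
  rw [unitVec_iff_dotProduct_self_eq_one] at hv hw
  have hQ_eq := eq_smul_one_sub_smul_vecMulVec_cross hQ htr hv hw hvw hQv hQw
  have hpp := cross_dotProduct_self hv hw hvw
  set p := v ⨯₃ w
  have hp : p ≠ 0 := fun h0 => by simp [h0] at hpp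
  have heigen : IsEigen Q (-2 * s) p := by
    rw [IsEigen, hQ_eq, smul_one_sub_smul_vecMulVec_mulVec, hpp]
    module
  have hle : -2 * s ≤ s := hmax _ p hp heigen
  have hnorm : ‖WithLp.toLp 2 p‖ = 1 := by
    rw [← sq_eq_sq₀ (norm_nonneg _) zero_le_one, ← dotProduct_self_eq_norm_sq, hpp, one_pow]
  exact ⟨s, by linarith, WithLp.toLp 2 p, hnorm, hQ_eq⟩

/-- The matrix `Φ([p], 0) = 1 - 3 p ⊗ p` as a function of the line `[p]`; its multiples by `e^t`
are the `Φ([p], t)`. -/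
def oblateTensor (x : ℙ ℝ V3) : E9 := toE (1 - (3 : ℝ) • lineProjection x)

theorem smul_oblateTensor_mk (s : ℝ) {p : V3} (hp : p ≠ 0) (hnorm : ‖p‖ = 1) :
    s • oblateTensor (Projectivization.mk ℝ p hp) =
      toE (s • (1 - (3 : ℝ) • vecMulVec p.ofLp p.ofLp)) := by
  rw [oblateTensor, lineProjection_mk hp hnorm]
  rfl

theorem norm_oblateTensor (x : ℙ ℝ V3) : ‖oblateTensor x‖ = √6 := by
  obtain ⟨p, hp, hnorm, rfl⟩ := exists_norm_eq_one_mk_eq x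
  rw [oblateTensor, lineProjection_mk hp hnorm]
  exact norm_toE_one_sub_three_smul_vecMulVec (dotProduct_self_eq_one hnorm)

theorem oblateTensor_ne_zero (x : ℙ ℝ V3) : oblateTensor x ≠ 0 :=
  norm_ne_zero_iff.1 (by simp [norm_oblateTensor])

theorem isEmbedding_oblateTensor : IsEmbedding oblateTensor := by
  have hproj : Continuous (lineProjection : ℙ ℝ V3 → Mat3) :=
    continuous_lineProjection isQuotientMap_mk'
  have hcont : Continuous oblateTensor := continuous_toE.comp (by fun_prop)
  have hinj : Function.Injective oblateTensor := fun x y h =>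
    lineProjection_injective (smul_right_injective _ three_ne_zero
      (sub_right_injective (toE_injective h)))
  exact (hcont.isClosedEmbedding hinj).isEmbedding

theorem mem_CsetE_iff {A : E9} :
    A ∈ CsetE ↔ ∃ s : ℝ, 0 ≤ s ∧ ∃ x : ℙ ℝ V3, s • oblateTensor x = A := by
  constructor
  · rintro ⟨⟨hsymm, htr⟩, htwo⟩
    obtain ⟨s, hs, p, hnorm, hA⟩ := exists_eq_smul_one_sub_three_smul_vecMulVec hsymm htr htwo
    have hp : p ≠ 0 := norm_ne_zero_iff.1 (by simp [hnorm])
    exact ⟨s, hs, .mk ℝ p hp, (smul_oblateTensor_mk s hp hnorm).trans congr(toE $hA).symm⟩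
  · rintro ⟨s, hs, x, rfl⟩
    obtain ⟨p, hp, hnorm, rfl⟩ := exists_norm_eq_one_mk_eq x
    rw [smul_oblateTensor_mk s hp hnorm]
    refine ⟨⟨isSymm_smul_one_sub_smul_vecMulVec s 3 _, ?_⟩,
      twoLargestEqual_smul_one_sub_three_smul_vecMulVec hs hp⟩
    change (s • (1 - (3 : ℝ) • vecMulVec p.ofLp p.ofLp)).trace = 0
    rw [trace_smul, trace_one_sub_three_smul_vecMulVec (dotProduct_self_eq_one hnorm), smul_zero]

theorem range_exp_smul_oblateTensor :
    Set.range (fun z : ℙ ℝ V3 × ℝ => Real.exp z.2 • oblateTensor z.1) =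
      {A | A ∈ CsetE ∧ A ≠ 0} := by
  ext A
  constructor
  · rintro ⟨⟨x, t⟩, rfl⟩
    exact ⟨mem_CsetE_iff.2 ⟨_, (Real.exp_pos t).le, x, rfl⟩,
      smul_ne_zero (Real.exp_ne_zero t) (oblateTensor_ne_zero x)⟩
  · rintro ⟨hA, hA0⟩
    obtain ⟨s, hs, x, rfl⟩ := mem_CsetE_iff.1 hA
    have hspos : 0 < s := hs.lt_of_ne' (smul_ne_zero_iff.1 hA0).1
    exact ⟨(x, Real.log s), by simp only [Real.exp_log hspos]⟩

end Cone

theorem statement19 :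
    ∃ H : (Projectivization ℝ V3 × ℝ) ≃ₜ {A : E9 // A ∈ CsetE ∧ A ≠ 0},
      ∀ (p : V3) (hp : p ≠ 0), ‖p‖ = 1 → ∀ t : ℝ,
        (H (Projectivization.mk ℝ p hp, t) : E9) =
          toE (Real.exp t •
            ((1 : Mat3) - (3 : ℝ) • Matrix.vecMulVec (fun i => p i) (fun i => p i))) := by
  have hΦ : IsEmbedding fun z : ℙ ℝ V3 × ℝ => Real.exp z.2 • oblateTensor z.1 :=
    isEmbedding_exp_smul isEmbedding_oblateTensor (by positivity) norm_oblateTensor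
  exact ⟨hΦ.toHomeomorph.trans (.setCongr range_exp_smul_oblateTensor),
    fun p hp hnorm t => smul_oblateTensor_mk (Real.exp t) hp hnorm⟩
end
end
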